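/- Let ε > 0 be fixed. There exist constants C = C(ε) > 0 and B = B(ε) > 0 such that the following holds. Let d ≥ 2 be an integer, let N ≥ 2 be real, and let N_1, …, N_40 ≥ 1/2 be reals with N_1 ⋯ N_40 ≤ N^{15/8−ε}. For each j = 1, …, 40, let a_j : ℕ → ℂ be one of the three functions n ↦ 1, n ↦ μ(n), or n ↦ log n, and assume that a_j is n ↦ 1 or n ↦ log n for every j with N_j > N^{1/10}. Then ∫_{−∞}^{∞} Σ*_{χ mod d} |Π_{j=1}^{40} Σ_{N_j < n ≤ 2N_j} a_j(n) χ(n) n^{−1/2−it}| dt/(t²+1) ≤ C · ((N+d)² N^{1/16}/d) · (log(dN))^B. -/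

import Mathlib

open MeasureTheory Real Complex Finset

/-- The sum of `f` over all primitive Dirichlet characters modulo `d`
(a finite sum, since there are finitely many Dirichlet characters modulo `d`). -/
noncomputable def sumPrimitive (d : ℕ) (f : DirichletCharacter ℂ d → ℝ) : ℝ :=
  ∑ᶠ χ ∈ {χ : DirichletCharacter ℂ d | χ.IsPrimitive}, f χ



namespace DPB

open ArithmeticFunction in
/-- The `k`-fold divisor function, as a real-valued function. -/
noncomputable def dv (k n : ℕ) : ℝ := (((ArithmeticFunction.zeta : ArithmeticFunction ℕ) ^ k) n : ℕ)

lemma dv_nonneg (k n : ℕ) : 0 ≤ dv k n := Nat.cast_nonneg _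

lemma dv_succ (k n : ℕ) : dv (k + 1) n = ∑ p ∈ n.divisorsAntidiagonal, dv k p.1 := by
  unfold dv
  rw [pow_succ, ArithmeticFunction.mul_apply]
  push_cast
  refine sum_congr rfl fun p hp => ?_
  have : p.2 ≠ 0 := by
    have := Nat.mem_divisorsAntidiagonal.1 hp
    rintro h; apply this.2; rw [← this.1, h, mul_zero]
  simp [ArithmeticFunction.zeta_apply, this]

lemma dv_add (k l n : ℕ) : dv (k + l) n = ∑ p ∈ n.divisorsAntidiagonal, dv k p.1 * dv l p.2 := by
  unfold dv
  rw [pow_add, ArithmeticFunction.mul_apply]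
  push_cast
  rfl

lemma dv_one (n : ℕ) (hn : n ≠ 0) : dv 1 n = 1 := by
  simp [dv, ArithmeticFunction.zeta_apply, hn]

lemma dv_zero_one : dv 0 1 = 1 := by
  simp [dv]

lemma dv_succ' (k n : ℕ) : dv (k + 1) n = ∑ e ∈ n.divisors, dv k (n / e) := by
  rw [dv_succ, Nat.sum_divisorsAntidiagonal' (f := fun a _ => dv k a)]

lemma dv_submul (k : ℕ) : ∀ m n : ℕ, dv k (m * n) ≤ dv k m * dv k n := by
  induction k with
  | zero =>
    intro m n
    simp only [dv, pow_zero, ArithmeticFunction.one_apply]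
    by_cases hm : m = 1
    · by_cases hn : n = 1 <;> simp [hm, hn]
    · have : m * n ≠ 1 := by
        intro h; exact hm (Nat.eq_one_of_mul_eq_one_right h)
      simp [hm, this]
  | succ k ih =>
    intro m n
    rw [dv_succ', dv_succ', dv_succ', Nat.divisors_mul, sum_mul_sum, ← sum_product']
    rw [← Finset.image_mul_product]
    refine (Finset.sum_image_le_of_nonneg ?_).trans ?_
    · intro i _; exact dv_nonneg _ _
    refine sum_le_sum fun p hp => ?_
    obtain ⟨h1, h2⟩ := mem_product.1 hp
    have h1' := Nat.dvd_of_mem_divisors h1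
    have h2' := Nat.dvd_of_mem_divisors h2
    rw [← Nat.div_mul_div_comm h1' h2']
    exact ih _ _

lemma sum_dv_le (k X : ℕ) (g : ℕ → ℝ) (hg : ∀ n, 0 ≤ g n) (hsub : ∀ m n, g (m * n) ≤ g m * g n)
    (h1 : g 1 ≤ 1) :
    ∑ n ∈ Icc 1 X, dv k n * g n / n ≤ (∑ n ∈ Icc 1 X, g n / n) ^ k := by
  induction k with
  | zero =>
    rw [pow_zero]
    have : ∀ n ∈ Icc 1 X, dv 0 n * g n / n = if n = 1 then g 1 else 0 := by
      intro n hn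
      by_cases h : n = 1 <;> simp [dv, h]
    rw [sum_congr rfl this, sum_ite_eq']
    split_ifs <;> linarith
  | succ k ih =>
    rw [pow_succ]
    have hnn : 0 ≤ ∑ n ∈ Icc 1 X, g n / n := sum_nonneg fun n _ => div_nonneg (hg n) n.cast_nonneg
    refine le_trans ?_ (mul_le_mul_of_nonneg_right ih hnn)
    rw [sum_mul_sum, ← sum_product']
    calc ∑ n ∈ Icc 1 X, dv (k + 1) n * g n / n
        = ∑ n ∈ Icc 1 X, ∑ p ∈ n.divisorsAntidiagonal, dv k p.1 * g (p.1 * p.2) / ((p.1 : ℝ) * p.2) := by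
          refine sum_congr rfl fun n hn => ?_
          rw [dv_succ, sum_mul, sum_div]
          refine sum_congr rfl fun p hp => ?_
          rw [← (Nat.mem_divisorsAntidiagonal.1 hp).1]; push_cast; rfl
      _ ≤ ∑ n ∈ Icc 1 X, ∑ p ∈ (Icc 1 X ×ˢ Icc 1 X) with p.1 * p.2 = n,
            dv k p.1 * g (p.1 * p.2) / ((p.1 : ℝ) * p.2) := by
          refine sum_le_sum fun n hn => ?_
          refine sum_le_sum_of_subset_of_nonneg ?_ ?_
          · intro p hp
            obtain ⟨h1, h2⟩ := Nat.mem_divisorsAntidiagonal.1 hp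
            have ha : p.1 ≠ 0 := by rintro h; apply h2; rw [← h1, h, zero_mul]
            have hb : p.2 ≠ 0 := by rintro h; apply h2; rw [← h1, h, mul_zero]
            have hX := (mem_Icc.1 hn).2
            simp only [mem_filter, mem_product, mem_Icc]
            refine ⟨⟨⟨by omega, ?_⟩, by omega, ?_⟩, h1⟩
            · exact (Nat.le_of_dvd (by omega) ⟨p.2, h1.symm⟩).trans hX
            · exact (Nat.le_of_dvd (by omega) ⟨p.1, by rw [← h1, mul_comm]⟩).trans hX
          · intro p _ _
            exact div_nonneg (mul_nonneg (dv_nonneg _ _) (hg _)) (by positivity)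
      _ ≤ ∑ p ∈ Icc 1 X ×ˢ Icc 1 X, dv k p.1 * g (p.1 * p.2) / ((p.1 : ℝ) * p.2) := by
          refine sum_fiberwise_le_sum_of_sum_fiber_nonneg ?_
          intro n _
          exact sum_nonneg fun p _ => div_nonneg (mul_nonneg (dv_nonneg _ _) (hg _)) (by positivity)
      _ ≤ _ := by
          refine sum_le_sum fun p hp => ?_
          rw [div_mul_div_comm]
          refine div_le_div_of_nonneg_right ?_ (by positivity)
          rw [mul_assoc]
          exact mul_le_mul_of_nonneg_left (hsub _ _) (dv_nonneg _ _)

lemma sum_one_div_le (X : ℝ) (hX : 1 ≤ X) :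
    ∑ n ∈ Icc 1 ⌊X⌋₊, (1 : ℝ) / n ≤ 1 + Real.log X := by
  have := harmonic_floor_le_one_add_log X hX
  rw [harmonic_eq_sum_Icc] at this
  push_cast at this
  simpa using this

lemma sum_dv_sq_le (k : ℕ) (X : ℝ) (hX : 1 ≤ X) :
    ∑ n ∈ Icc 1 ⌊X⌋₊, dv k n ^ 2 / n ≤ (1 + Real.log X) ^ (k * k) := by
  have h1 : ∑ n ∈ Icc 1 ⌊X⌋₊, dv k n / n ≤ (1 + Real.log X) ^ k := by
    have := sum_dv_le k ⌊X⌋₊ (fun _ => 1) (by simp) (by simp) le_rfl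
    simp only [mul_one] at this
    refine this.trans (pow_le_pow_left₀ (sum_nonneg fun n _ => by positivity) (sum_one_div_le X hX) _)
  have hd1 : dv k 1 ≤ 1 := by
    have : ∀ k, dv k 1 = 1 := by
      intro k
      induction k with
      | zero => exact dv_zero_one
      | succ k ih => rw [dv_succ]; simp [ih]
    exact (this k).le
  have h2 := sum_dv_le k ⌊X⌋₊ (dv k) (dv_nonneg k) (dv_submul k) hd1
  rw [pow_mul]
  calc _ = ∑ n ∈ Icc 1 ⌊X⌋₊, dv k n * dv k n / n := by simp [sq]
    _ ≤ _ := h2.trans (pow_le_pow_left₀ (sum_nonneg fun n _ => div_nonneg (dv_nonneg _ _) n.cast_nonneg) h1 _)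

/-- mean value over all characters -/
lemma card_modEq_le (d : ℕ) [NeZero d] (X : ℕ) (r : ZMod d) :
    (((Icc 1 X).filter (fun n : ℕ => (n : ZMod d) = r)).card : ℝ) ≤ X / d + 1 := by
  have h0 : (0:ℝ) < d := by exact_mod_cast NeZero.pos d
  have : ((Icc 1 X).filter (fun n : ℕ => (n : ZMod d) = r)).card ≤ X / d + 1 := by
    rw [← Finset.card_range (X / d + 1)]
    refine Finset.card_le_card_of_injOn (fun n => n / d) ?_ ?_
    · intro n hn
      simp only [coe_filter, mem_Icc, Set.mem_ofPred_eq] at hn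
      simp only [coe_range, Set.mem_Iio]
      exact Nat.lt_succ_of_le (Nat.div_le_div_right hn.1.2)
    · intro n hn m hm h
      simp only [coe_filter, mem_Icc, Set.mem_ofPred_eq] at hn hm
      have h2 : n % d = m % d := (ZMod.natCast_eq_natCast_iff' n m d).1 (hn.2.trans hm.2.symm)
      have h : n / d = m / d := h
      rw [← Nat.div_add_mod n d, ← Nat.div_add_mod m d, h, h2]
  calc _ ≤ ((X / d + 1 : ℕ) : ℝ) := by exact_mod_cast this
    _ ≤ _ := by push_cast; gcongr; exact Nat.cast_div_le

lemma sum_char_mul_star (d : ℕ) [NeZero d] (m n : ZMod d) :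
    ‖∑ χ : DirichletCharacter ℂ d, χ m * star (χ n)‖ ≤ if m = n then (d : ℝ) else 0 := by
  by_cases hn : IsUnit n
  · have h : ∀ χ : DirichletCharacter ℂ d, χ m * star (χ n) = χ n⁻¹ * χ m := by
      intro χ
      have h1 : χ n⁻¹ * χ n = 1 := by rw [← map_mul, ZMod.inv_mul_of_unit n hn, map_one]
      rw [mul_comm, MulChar.star_apply', MulChar.inv_apply_eq_inv', eq_inv_of_mul_eq_one_left h1]
    rw [sum_congr rfl fun χ _ => h χ, DirichletCharacter.sum_char_inv_mul_char_eq ℂ hn]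
    by_cases hmn : m = n
    · simp only [hmn, if_true, Complex.norm_natCast]
      exact_mod_cast Nat.totient_le d
    · simp [hmn, Ne.symm hmn]
  · have : ∀ χ : DirichletCharacter ℂ d, χ n = 0 := fun χ => MulChar.map_nonunit χ hn
    simp only [this, star_zero, mul_zero, sum_const_zero, norm_zero]
    split_ifs <;> positivity

lemma large_sieve (d : ℕ) [NeZero d] (X : ℕ) (c : ℕ → ℂ) :
    ∑ χ : DirichletCharacter ℂ d, ‖∑ n ∈ Icc 1 X, c n * χ n‖ ^ 2
      ≤ (d + X) * ∑ n ∈ Icc 1 X, ‖c n‖ ^ 2 := by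
  have h0 : (0:ℝ) < d := by exact_mod_cast NeZero.pos d
  have key : ((∑ χ : DirichletCharacter ℂ d, ‖∑ n ∈ Icc 1 X, c n * χ n‖ ^ 2 : ℝ) : ℂ)
      = ∑ m ∈ Icc 1 X, ∑ n ∈ Icc 1 X, c m * star (c n) *
        ∑ χ : DirichletCharacter ℂ d, χ m * star (χ n) := by
    push_cast
    have : ∀ χ : DirichletCharacter ℂ d, ((‖∑ n ∈ Icc 1 X, c n * χ n‖ : ℝ) : ℂ) ^ 2 =
        ∑ m ∈ Icc 1 X, ∑ n ∈ Icc 1 X, c m * star (c n) * (χ m * star (χ n)) := by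
      intro χ
      rw [← Complex.mul_conj', map_sum, sum_mul_sum]
      refine sum_congr rfl fun m _ => sum_congr rfl fun n _ => ?_
      rw [map_mul]
      simp only [Complex.star_def]
      ring
    rw [sum_congr rfl fun χ _ => this χ, sum_comm]
    refine sum_congr rfl fun m _ => ?_
    rw [sum_comm]
    refine sum_congr rfl fun n _ => ?_
    rw [mul_sum]
  have h1 : ∑ χ : DirichletCharacter ℂ d, ‖∑ n ∈ Icc 1 X, c n * χ n‖ ^ 2 ≤
      ∑ m ∈ Icc 1 X, ∑ n ∈ Icc 1 X, ‖c m‖ * ‖c n‖ * (if (m : ZMod d) = n then (d : ℝ) else 0) := by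
    have hnn : 0 ≤ ∑ χ : DirichletCharacter ℂ d, ‖∑ n ∈ Icc 1 X, c n * χ n‖ ^ 2 :=
      sum_nonneg fun _ _ => by positivity
    rw [← Complex.norm_of_nonneg hnn, key]
    refine (norm_sum_le _ _).trans (sum_le_sum fun m _ => (norm_sum_le _ _).trans (sum_le_sum fun n _ => ?_))
    rw [norm_mul, norm_mul, norm_star]
    exact mul_le_mul_of_nonneg_left (sum_char_mul_star d m n) (by positivity)
  refine h1.trans ?_
  have h2 : ∀ m ∈ Icc 1 X, ∑ n ∈ Icc 1 X, ‖c m‖ ^ 2 * (if (m : ZMod d) = n then (d : ℝ) else 0)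
      ≤ (d + X) * ‖c m‖ ^ 2 := by
    intro m _
    rw [← mul_sum, mul_comm]
    refine mul_le_mul_of_nonneg_right ?_ (by positivity)
    rw [← sum_filter, sum_const, nsmul_eq_mul]
    have := card_modEq_le d X (m : ZMod d)
    have h3 : (Icc 1 X).filter (fun n : ℕ => (m : ZMod d) = n) = (Icc 1 X).filter (fun n : ℕ => (n : ZMod d) = m) := by
      ext; simp [eq_comm]
    rw [h3]
    calc _ ≤ ((X:ℝ) / d + 1) * d := mul_le_mul_of_nonneg_right this h0.le
      _ = _ := by field_simp; ring
  have h3 : ∑ m ∈ Icc 1 X, ∑ n ∈ Icc 1 X, ‖c n‖ ^ 2 * (if (m : ZMod d) = n then (d : ℝ) else 0)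
     = ∑ m ∈ Icc 1 X, ∑ n ∈ Icc 1 X, ‖c m‖ ^ 2 * (if (m : ZMod d) = n then (d : ℝ) else 0) := by
    rw [sum_comm]
    refine sum_congr rfl fun m _ => sum_congr rfl fun n _ => ?_
    simp only [eq_comm]
  have h4 := sum_le_sum h2
  rw [← mul_sum] at h4
  have h5 : ∑ m ∈ Icc 1 X, ∑ n ∈ Icc 1 X, ‖c m‖ * ‖c n‖ * (if (m : ZMod d) = n then (d : ℝ) else 0)
     ≤ ∑ m ∈ Icc 1 X, ∑ n ∈ Icc 1 X, (1/2) * (‖c m‖ ^ 2 * (if (m : ZMod d) = n then (d : ℝ) else 0)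
       + ‖c n‖ ^ 2 * (if (m : ZMod d) = n then (d : ℝ) else 0)) := by
    refine sum_le_sum fun m _ => sum_le_sum fun n _ => ?_
    have : (0:ℝ) ≤ (if (m : ZMod d) = n then (d : ℝ) else 0) := by split_ifs <;> positivity
    nlinarith [mul_nonneg (sq_nonneg (‖c m‖ - ‖c n‖)) this]
  simp only [← mul_sum, sum_add_distrib] at h5
  simp only [← mul_sum] at h3 h4
  linarith

end DPB


namespace DPB

/-- `f` is a Dirichlet polynomial (in the character) of length at most `X` whose coefficients are
bounded by `L * d_k(n) / √n`. -/
def PolyBd (d : ℕ) (f : DirichletCharacter ℂ d → ℂ) (X : ℝ) (k : ℕ) (L : ℝ) : Prop :=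
  ∃ c : ℕ → ℂ, (∀ n : ℕ, X < n → c n = 0) ∧ (∀ n, ‖c n‖ ≤ L * dv k n / √n) ∧
    ∀ χ, f χ = ∑ n ∈ Icc 1 ⌊X⌋₊, c n * χ n

lemma PolyBd.one (d : ℕ) : PolyBd d (fun _ => 1) 1 0 1 := by
  refine ⟨fun n => if n = 1 then 1 else 0, ?_, ?_, ?_⟩
  · intro n hn
    have : n ≠ 1 := by rintro rfl; simp at hn
    simp [this]
  · intro n
    by_cases h : n = 1
    · simp [h, dv_zero_one]
    · simp only [h, if_false, norm_zero]
      exact div_nonneg (mul_nonneg zero_le_one (dv_nonneg _ _)) (Real.sqrt_nonneg _)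
  · intro χ
    simp

lemma PolyBd.mul {d : ℕ} {f g : DirichletCharacter ℂ d → ℂ} {X Y : ℝ} {k l : ℕ} {L M : ℝ}
    (hX : 1 ≤ X) (hY : 1 ≤ Y) (hL : 0 ≤ L) (hf : PolyBd d f X k L) (hg : PolyBd d g Y l M) :
    PolyBd d (fun χ => f χ * g χ) (X * Y) (k + l) (L * M) := by
  obtain ⟨a, ha1, ha2, ha3⟩ := hf
  obtain ⟨b, hb1, hb2, hb3⟩ := hg
  refine ⟨fun n => ∑ p ∈ n.divisorsAntidiagonal, a p.1 * b p.2, ?_, ?_, ?_⟩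
  · intro n hn
    refine sum_eq_zero fun p hp => ?_
    have h1 := (Nat.mem_divisorsAntidiagonal.1 hp).1
    by_cases h : X < p.1
    · rw [ha1 _ h, zero_mul]
    · by_cases h' : Y < p.2
      · rw [hb1 _ h', mul_zero]
      · exfalso
        push Not at h h'
        have : (n : ℝ) ≤ X * Y := by
          rw [← h1]; push_cast
          exact mul_le_mul h h' (Nat.cast_nonneg _) (by linarith)
        linarith
  · intro n
    refine (norm_sum_le _ _).trans ?_
    rw [dv_add, mul_sum, sum_div]
    refine sum_le_sum fun p hp => ?_
    rw [norm_mul]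
    refine (mul_le_mul (ha2 _) (hb2 _) (norm_nonneg _) ?_).trans (le_of_eq ?_)
    · exact div_nonneg (mul_nonneg hL (dv_nonneg _ _)) (Real.sqrt_nonneg _)
    · have h1 := (Nat.mem_divisorsAntidiagonal.1 hp).1
      rw [← h1]; push_cast
      rw [Real.sqrt_mul (Nat.cast_nonneg _), div_mul_div_comm]
      ring
  · intro χ
    beta_reduce
    rw [ha3, hb3, sum_mul_sum, ← sum_product']
    have hmap : ∀ p ∈ Icc 1 ⌊X⌋₊ ×ˢ Icc 1 ⌊Y⌋₊, p.1 * p.2 ∈ Icc 1 ⌊X * Y⌋₊ := by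
      intro p hp
      simp only [mem_product, mem_Icc] at hp ⊢
      refine ⟨Nat.mul_pos hp.1.1 hp.2.1, Nat.le_floor ?_⟩
      push_cast
      exact mul_le_mul ((Nat.le_floor_iff (by linarith)).1 hp.1.2) ((Nat.le_floor_iff (by linarith)).1 hp.2.2)
        (Nat.cast_nonneg _) (by linarith)
    rw [← sum_fiberwise_of_maps_to hmap]
    refine sum_congr rfl fun n hn => ?_
    rw [sum_mul]
    have hsub : (Icc 1 ⌊X⌋₊ ×ˢ Icc 1 ⌊Y⌋₊).filter (fun p => p.1 * p.2 = n) ⊆ n.divisorsAntidiagonal := by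
      intro p hp
      simp only [mem_filter] at hp
      rw [Nat.mem_divisorsAntidiagonal]
      exact ⟨hp.2, by have := (mem_Icc.1 hn).1; omega⟩
    rw [← sum_subset hsub]
    · refine sum_congr rfl fun p hp => ?_
      rw [← (Nat.mem_divisorsAntidiagonal.1 (hsub hp)).1]
      push_cast
      rw [map_mul]; ring
    · intro p hp hp'
      obtain ⟨h1, h2⟩ := Nat.mem_divisorsAntidiagonal.1 hp
      have ha : p.1 ≠ 0 := by rintro h; apply h2; rw [← h1, h, zero_mul]
      have hb : p.2 ≠ 0 := by rintro h; apply h2; rw [← h1, h, mul_zero]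
      by_cases h : X < p.1
      · rw [ha1 _ h, zero_mul, zero_mul]
      · by_cases h' : Y < p.2
        · rw [hb1 _ h', mul_zero, zero_mul]
        · exfalso
          push Not at h h'
          apply hp'
          simp only [mem_filter, mem_product, mem_Icc]
          exact ⟨⟨⟨by omega, Nat.le_floor h⟩, by omega, Nat.le_floor h'⟩, h1⟩

lemma one_le_prod_real {ι : Type*} (S : Finset ι) (X : ι → ℝ) (h : ∀ i ∈ S, 1 ≤ X i) :
    1 ≤ ∏ i ∈ S, X i :=
  Finset.prod_induction X (fun x => 1 ≤ x) (fun _ _ ha hb => one_le_mul_of_one_le_of_one_le ha hb)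
    le_rfl h

lemma PolyBd.prod {d : ℕ} {ι : Type*} [DecidableEq ι] (S : Finset ι) (f : ι → DirichletCharacter ℂ d → ℂ)
    (X : ι → ℝ) (L : ℝ) (hL : 0 ≤ L) (hX : ∀ i, 1 ≤ X i) (h : ∀ i ∈ S, PolyBd d (f i) (X i) 1 L) :
    PolyBd d (fun χ => ∏ i ∈ S, f i χ) (∏ i ∈ S, X i) (S.card) (L ^ S.card) := by
  induction S using Finset.induction_on with
  | empty => simpa using PolyBd.one d
  | insert i S hi ih =>
    simp only [prod_insert hi, card_insert_of_notMem hi]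
    rw [add_comm, pow_add, pow_one]
    refine PolyBd.mul (hX i) ?_ hL (h i (mem_insert_self _ _)) (ih fun j hj => h j (mem_insert_of_mem hj))
    exact one_le_prod_real _ _ fun i _ => hX i

lemma PolyBd.star {d : ℕ} [NeZero d] {f : DirichletCharacter ℂ d → ℂ} {X : ℝ} {k : ℕ} {L : ℝ}
    (hf : PolyBd d f X k L) : PolyBd d (fun χ => star (f χ⁻¹)) X k L := by
  obtain ⟨a, ha1, ha2, ha3⟩ := hf
  refine ⟨fun n => Star.star (a n), ?_, ?_, ?_⟩
  · intro n hn; simp [ha1 n hn]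
  · intro n; beta_reduce; rw [norm_star]; exact ha2 n
  · intro χ
    simp only [ha3, star_sum, star_mul']
    refine sum_congr rfl fun n _ => ?_
    rw [MulChar.star_apply', inv_inv]

lemma PolyBd.sq {d : ℕ} [NeZero d] {f : DirichletCharacter ℂ d → ℂ} {X : ℝ} {k : ℕ} {L : ℝ}
    (hX : 1 ≤ X) (hf : PolyBd d f X k L) :
    ∑ χ, ‖f χ‖ ^ 2 ≤ (d + X) * (L ^ 2 * (1 + Real.log X) ^ (k * k)) := by
  obtain ⟨a, ha1, ha2, ha3⟩ := hf
  simp only [ha3]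
  refine (large_sieve d _ _).trans ?_
  refine mul_le_mul ?_ ?_ (sum_nonneg fun _ _ => by positivity) (by positivity)
  · gcongr; exact Nat.floor_le (by linarith)
  · refine le_trans ?_ (mul_le_mul_of_nonneg_left (sum_dv_sq_le k X hX) (sq_nonneg L))
    rw [mul_sum]
    refine sum_le_sum fun n _ => ?_
    refine (pow_le_pow_left₀ (norm_nonneg _) (ha2 n) 2).trans (le_of_eq ?_)
    rw [div_pow, Real.sq_sqrt (Nat.cast_nonneg _)]
    ring

/-- The basic building block. -/
noncomputable def Kp (d : ℕ) (a : ℕ → ℂ) (M t : ℝ) (χ : DirichletCharacter ℂ d) : ℂ :=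
  ∑ n ∈ Finset.Ioc ⌊M⌋₊ ⌊2 * M⌋₊, a n * χ (n : ZMod d) * (n : ℂ) ^ (-(1 / 2 : ℂ) - Complex.I * t)

lemma norm_cpow_half (n : ℕ) (hn : 0 < n) (t : ℝ) :
    ‖(n : ℂ) ^ (-(1 / 2 : ℂ) - Complex.I * t)‖ = 1 / √n := by
  rw [Complex.norm_natCast_cpow_of_pos hn]
  simp only [Complex.sub_re, Complex.neg_re, Complex.mul_re, Complex.I_re, Complex.I_im,
    Complex.ofReal_re, Complex.ofReal_im]
  norm_num
  rw [Real.rpow_neg (Nat.cast_nonneg _), Real.sqrt_eq_rpow]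

lemma PolyBd.Kp {d : ℕ} (a : ℕ → ℂ) (M t P L : ℝ) (hL : 0 ≤ L) (hP : M ≤ P) (hP1 : 1 ≤ P)
    (ha : ∀ n : ℕ, 1 ≤ n → (n : ℝ) ≤ 2 * P → ‖a n‖ ≤ L) : PolyBd d (Kp d a M t) (2 * P) 1 L := by
  have hnn : ∀ n, 0 ≤ L * dv 1 n / √n := fun n =>
    div_nonneg (mul_nonneg hL (dv_nonneg _ _)) (Real.sqrt_nonneg _)
  refine ⟨fun n => if n ∈ Finset.Ioc ⌊M⌋₊ ⌊2 * M⌋₊ then a n * (n : ℂ) ^ (-(1 / 2 : ℂ) - Complex.I * t) else 0,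
    ?_, ?_, ?_⟩
  · intro n hn
    beta_reduce
    rw [if_neg]
    intro h
    have h1 := (mem_Ioc.1 h)
    have h2 : (n:ℝ) ≤ 2 * M := (Nat.le_floor_iff' (by omega)).1 h1.2
    linarith
  · intro n
    beta_reduce
    split_ifs with h
    · have h1 := (mem_Ioc.1 h)
      have h2 : (n:ℝ) ≤ 2 * M := (Nat.le_floor_iff' (by omega)).1 h1.2
      have h0 : 0 < n := by omega
      rw [norm_mul, norm_cpow_half n h0, dv_one n h0.ne', mul_one, mul_one_div]
      exact div_le_div_of_nonneg_right (ha n h0 (by linarith)) (Real.sqrt_nonneg _)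
    · rw [norm_zero]; exact hnn n
  · intro χ
    unfold DPB.Kp
    have hsub : Finset.Ioc ⌊M⌋₊ ⌊2 * M⌋₊ ⊆ Icc 1 ⌊2 * P⌋₊ := by
      intro n hn
      have h1 := mem_Ioc.1 hn
      exact mem_Icc.2 ⟨by omega, h1.2.trans (Nat.floor_le_floor (by linarith))⟩
    rw [← sum_subset hsub]
    · refine sum_congr rfl fun n hn => ?_
      beta_reduce
      rw [if_pos hn]; ring
    · intro n _ hn
      beta_reduce
      rw [if_neg hn, zero_mul]

end DPB


namespace DPB

lemma norm_gaussSum_sq {d : ℕ} [NeZero d] {χ : DirichletCharacter ℂ d} (hχ : χ.IsPrimitive) :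
    ‖gaussSum χ ZMod.stdAddChar‖ ^ 2 = d := by
  set τ := gaussSum χ ZMod.stdAddChar with hτ
  have h1 := congrFun (ZMod.dft_dft (χ : ZMod d → ℂ)) 1
  rw [ZMod.dft_apply] at h1
  have hstar : star τ = ∑ j : ZMod d, χ⁻¹ j * ZMod.stdAddChar (-j) := by
    rw [hτ, gaussSum, star_sum]
    refine sum_congr rfl fun j _ => ?_
    rw [star_mul', MulChar.star_apply', AddChar.map_neg_eq_conj]; rfl
  have h2 : ∑ j : ZMod d, ZMod.stdAddChar (-(j * 1)) • ZMod.dft (χ : ZMod d → ℂ) j = χ⁻¹ (-1) * (τ * star τ) := by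
    rw [hstar, mul_sum, mul_sum]
    refine sum_congr rfl fun j _ => ?_
    rw [DirichletCharacter.IsPrimitive.fourierTransform_eq_inv_mul_gaussSum hχ, ← neg_one_mul j, map_mul]
    simp only [mul_one, smul_eq_mul, neg_one_mul]
    ring
  rw [h2] at h1
  have h3 := congrArg norm h1
  have hu : ∀ ψ : DirichletCharacter ℂ d, ‖ψ (-1)‖ = 1 := by
    intro ψ
    have := DirichletCharacter.unit_norm_eq_one ψ (-1 : (ZMod d)ˣ)
    simpa using this
  rw [norm_mul, hu, norm_mul, norm_star, smul_eq_mul, norm_mul, hu] at h3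
  simp only [one_mul, mul_one, Complex.norm_natCast] at h3
  rw [sq]; exact h3

lemma char_dual {d : ℕ} [NeZero d] {χ : DirichletCharacter ℂ d} (hχ : χ.IsPrimitive) (n : ZMod d) :
    χ n * star (gaussSum χ ZMod.stdAddChar) = ∑ a : ZMod d, χ⁻¹ a * ZMod.stdAddChar (-(a * n)) := by
  have h1 := gaussSum_mulShift_of_isPrimitive (ZMod.stdAddChar) hχ n
  have h2 := congrArg star h1
  rw [star_mul', MulChar.star_apply', inv_inv] at h2
  rw [← h2, gaussSum, star_sum]
  refine sum_congr rfl fun j _ => ?_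
  rw [star_mul', MulChar.star_apply', AddChar.map_neg_eq_conj, AddChar.mulShift_apply, mul_comm n j]; rfl

lemma sum_zmod_eq {d : ℕ} [NeZero d] (F : ZMod d → ℂ) :
    ∑ a : ZMod d, F a = ∑ a ∈ range d, F (a : ZMod d) := by
  symm
  refine sum_bij (fun a _ => (a : ZMod d)) (fun _ _ => mem_univ _) ?_ ?_ (fun _ _ => rfl)
  · intro a ha b hb h
    have := (ZMod.natCast_eq_natCast_iff' a b d).1 h
    rwa [Nat.mod_eq_of_lt (mem_range.1 ha), Nat.mod_eq_of_lt (mem_range.1 hb)] at this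
  · intro b _
    exact ⟨b.val, mem_range.2 (ZMod.val_lt b), ZMod.natCast_zmod_val b⟩

lemma zmod_fold {d : ℕ} (hd : 2 ≤ d) [NeZero d] (ψ : DirichletCharacter ℂ d) (G : ZMod d → ℂ) :
    ‖∑ a : ZMod d, ψ a * G a‖ ≤ ‖∑ a ∈ Ico 1 (d / 2 + 1), ψ (a : ZMod d) * G a‖
      + ‖∑ a ∈ Ico 1 (d - d / 2), ψ (a : ZMod d) * G (-(a : ZMod d))‖ := by
  have : Fact (1 < d) := ⟨by omega⟩
  have h0 : ψ 0 = 0 := MulChar.map_nonunit ψ (by simp)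
  rw [sum_zmod_eq, range_eq_Ico, sum_eq_sum_Ico_succ_bot (by omega)]
  simp only [Nat.cast_zero, h0, zero_mul, zero_add]
  rw [← sum_Ico_consecutive _ (show 1 ≤ d / 2 + 1 by omega) (show d / 2 + 1 ≤ d by omega)]
  refine (norm_add_le _ _).trans (add_le_add le_rfl (le_of_eq ?_))
  have hu : ‖ψ (-1)‖ = 1 := by
    have := DirichletCharacter.unit_norm_eq_one ψ (-1 : (ZMod d)ˣ)
    simpa using this
  have h2 : ∑ a ∈ Ico (d / 2 + 1) d, ψ (a : ZMod d) * G a =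
      ψ (-1) * ∑ a ∈ Ico 1 (d - d / 2), ψ (a : ZMod d) * G (-(a : ZMod d)) := by
    rw [mul_sum]
    refine sum_bij (fun a _ => d - a) ?_ ?_ ?_ ?_
    · intro a ha; simp only [mem_Ico] at ha ⊢; omega
    · intro a ha b hb h; simp only [mem_Ico] at ha hb; omega
    · intro b hb; simp only [mem_Ico] at hb; exact ⟨d - b, by simp only [mem_Ico]; omega, by omega⟩
    · intro a ha
      simp only [mem_Ico] at ha
      rw [← mul_assoc, ← map_mul, Nat.cast_sub ha.2.le]
      simp
  rw [h2, norm_mul, hu, one_mul]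

/-- dyadic decomposition -/
lemma dyadic {d : ℕ} [NeZero d] (E : ℕ) (hE : E ≤ d) (G : ℕ → ℂ) (L : ℕ → ℝ) (hL : ∀ i, 0 ≤ L i)
    (hG : ∀ a, 1 ≤ a → a < E → ‖G a‖ ≤ L (Nat.log 2 a) / √a) :
    ∃ f : ℕ → DirichletCharacter ℂ d → ℂ, (∀ i, PolyBd d (f i) (2 ^ (i + 1)) 1 (L i)) ∧
      ∀ χ : DirichletCharacter ℂ d, ∑ a ∈ Ico 1 E, χ (a : ZMod d) * G a
        = ∑ i ∈ range (Nat.log 2 d + 1), f i χ := by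
  refine ⟨fun i χ => ∑ a ∈ (Ico 1 E).filter (fun a => Nat.log 2 a = i), χ (a : ZMod d) * G a, ?_, ?_⟩
  · intro i
    refine ⟨fun a => if a ∈ (Ico 1 E).filter (fun a => Nat.log 2 a = i) then G a else 0, ?_, ?_, ?_⟩
    · intro n hn
      beta_reduce
      rw [if_neg]
      intro h
      simp only [mem_filter, mem_Ico] at h
      have := Nat.lt_pow_succ_log_self (b := 2) (by norm_num) n
      rw [h.2] at this
      have h' : (n : ℝ) < 2 ^ (i + 1) := by exact_mod_cast this
      linarith
    · intro n
      beta_reduce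
      split_ifs with h
      · simp only [mem_filter, mem_Ico] at h
        rw [dv_one n (by omega), mul_one, ← h.2]
        exact hG n h.1.1 h.1.2
      · rw [norm_zero]
        exact div_nonneg (mul_nonneg (hL i) (dv_nonneg _ _)) (Real.sqrt_nonneg _)
    · intro χ
      beta_reduce
      have hsub : (Ico 1 E).filter (fun a => Nat.log 2 a = i) ⊆ Icc 1 ⌊(2 ^ (i + 1) : ℝ)⌋₊ := by
        intro n h
        simp only [mem_filter, mem_Ico] at h
        have := Nat.lt_pow_succ_log_self (b := 2) (by norm_num) n
        rw [h.2] at this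
        have h' : (n : ℝ) ≤ 2 ^ (i + 1) := by exact_mod_cast this.le
        exact mem_Icc.2 ⟨h.1.1, Nat.le_floor h'⟩
      rw [← sum_subset hsub]
      · refine sum_congr rfl fun n hn => ?_
        rw [if_pos hn, mul_comm]
      · intro n _ hn
        rw [if_neg hn, zero_mul]
  · intro χ
    rw [sum_fiberwise_of_maps_to]
    intro a ha
    simp only [mem_Ico] at ha
    rw [mem_range]
    exact Nat.lt_succ_of_le (Nat.log_mono_right (by omega))

lemma geo_bound (z : ℂ) (hz : ‖z‖ = 1) (hz1 : z ≠ 1) (A k : ℕ) :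
    ‖∑ i ∈ range k, z ^ (A + 1 + i)‖ ≤ 2 / ‖z - 1‖ := by
  have h : ∑ i ∈ range k, z ^ (A + 1 + i) = z ^ (A + 1) * ((z ^ k - 1) / (z - 1)) := by
    rw [← geom_sum_eq hz1, mul_sum]
    exact sum_congr rfl fun i _ => pow_add _ _ _
  rw [h, norm_mul, norm_pow, hz, one_pow, one_mul, norm_div]
  refine div_le_div_of_nonneg_right ?_ (norm_nonneg _)
  refine (norm_sub_le _ _).trans ?_
  rw [norm_pow, hz, one_pow, norm_one]; norm_num

lemma abel_bound (z : ℂ) (hz : ‖z‖ = 1) (hz1 : z ≠ 1) (f : ℕ → ℂ) (A B : ℕ) (v w : ℝ) (hw0 : 0 ≤ w)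
    (hv0 : 0 ≤ v) (hw : A < B → ‖f B‖ ≤ w) (hv : ∀ n, A < n → n < B → ‖f (n + 1) - f n‖ ≤ v) :
    ‖∑ n ∈ Ioc A B, f n * z ^ n‖ ≤ (w + ((B - A : ℕ) : ℝ) * v) * (2 / ‖z - 1‖) := by
  have hS : 0 ≤ 2 / ‖z - 1‖ := by positivity
  by_cases hAB : A < B
  · have h1 : ∑ n ∈ Ioc A B, f n * z ^ n = ∑ i ∈ range (B - A), f (A + 1 + i) • z ^ (A + 1 + i) := by
      rw [show Ioc A B = Ico (A + 1) (B + 1) by ext; simp [Nat.lt_succ_iff], sum_Ico_eq_sum_range]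
      simp only [smul_eq_mul]
      congr 2; omega
    rw [h1, sum_range_by_parts]
    refine (norm_sub_le _ _).trans ?_
    rw [add_mul]
    refine add_le_add ?_ ?_
    · rw [norm_smul]
      refine mul_le_mul ?_ (geo_bound z hz hz1 A _) (norm_nonneg _) hw0
      rw [show A + 1 + (B - A - 1) = B by omega]; exact hw hAB
    · refine (norm_sum_le _ _).trans ?_
      have : ∀ i ∈ range (B - A - 1), ‖(f (A + 1 + (i + 1)) - f (A + 1 + i)) • ∑ j ∈ range (i + 1), z ^ (A + 1 + j)‖
          ≤ v * (2 / ‖z - 1‖) := by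
        intro i hi
        rw [mem_range] at hi
        rw [norm_smul]
        exact mul_le_mul (hv (A + 1 + i) (by omega) (by omega)) (geo_bound z hz hz1 A _) (norm_nonneg _) hv0
      refine (sum_le_sum this).trans ?_
      rw [sum_const, card_range, nsmul_eq_mul, mul_assoc]
      refine mul_le_mul_of_nonneg_right ?_ (by positivity)
      exact_mod_cast Nat.sub_le _ _
  · rw [Ioc_eq_empty (by omega)]
    simp only [sum_empty, norm_zero]; positivity

end DPB


namespace DPB

lemma norm_stdAddChar_sub_one {d : ℕ} [NeZero d] (a : ℕ) (h2 : 2 * a ≤ d) :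
    4 * (a : ℝ) / d ≤ ‖(ZMod.stdAddChar (a : ZMod d) : ℂ) - 1‖ := by
  have h0 : (0:ℝ) < d := by exact_mod_cast NeZero.pos d
  have h := ZMod.stdAddChar_coe (N := d) (a : ℤ)
  rw [Int.cast_natCast] at h
  rw [h]
  have h3 : (2 * (π:ℂ) * I * ((a : ℤ) : ℂ) / d) = I * ((2 * π * a / d : ℝ) : ℂ) := by
    push_cast; ring
  rw [h3, Complex.norm_exp_I_mul_ofReal_sub_one]
  have h4 : 2 * π * a / d / 2 = π * (a / d) := by ring
  have h5 : (a:ℝ) / d ≤ 1 / 2 := by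
    rw [div_le_div_iff₀ h0 (by norm_num)]
    have : (2 * a : ℝ) ≤ d := by exact_mod_cast h2
    linarith
  have h6 := Real.mul_le_sin (x := π * (a / d)) (by positivity) (by nlinarith [Real.pi_pos])
  rw [h4]
  refine le_trans ?_ (le_abs_self _)
  have h7 : 2 / π * (π * (a / d)) = 2 * ((a:ℝ) / d) := by field_simp
  rw [h7] at h6
  calc 4 * (a:ℝ) / d = 2 * (2 * (a / d)) := by ring
    _ ≤ _ := by linarith

lemma variation (α : ℝ → ℝ) (α' : ℝ → ℝ) (hα : ∀ x, 0 < x → HasDerivAt α (α' x) x)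
    (Λ t : ℝ) (n : ℕ) (hn : 1 ≤ n) (hΛ : ∀ x, (n:ℝ) ≤ x → x ≤ n + 1 → |α x| ≤ Λ) (hα' : ∀ x, 1 ≤ x → |α' x| ≤ 1 / x)
    (M : ℝ) (hM : 1 ≤ M) (hMn : M ≤ n) :
    ‖(α ((n + 1 : ℕ) : ℝ) : ℂ) * ((n + 1 : ℕ) : ℂ) ^ (-(1 / 2 : ℂ) - Complex.I * t)
      - (α (n : ℝ) : ℂ) * (n : ℂ) ^ (-(1 / 2 : ℂ) - Complex.I * t)‖ ≤ (1 + Λ * (1 + |t|)) / (M * √M) := by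
  set s : ℂ := -(1 / 2 : ℂ) - Complex.I * t with hs
  have hn' : (1:ℝ) ≤ n := by exact_mod_cast hn
  have hΛ0 : 0 ≤ Λ := (abs_nonneg _).trans (hΛ n le_rfl (by linarith))
  have hsre : s.re = -(1/2) := by simp [hs]
  have hsn : ‖s‖ ≤ 1 + |t| := by
    rw [hs]
    refine (norm_sub_le _ _).trans ?_
    rw [norm_neg, norm_mul, Complex.norm_I, Complex.norm_real, Real.norm_eq_abs]
    norm_num
  have hder : ∀ x ∈ Set.Icc (n:ℝ) (n + 1), HasDerivWithinAt (fun x : ℝ => (α x : ℂ) * (x : ℂ) ^ s)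
      ((α' x : ℂ) * (x : ℂ) ^ s + (α x : ℂ) * (s * (x : ℂ) ^ (s - 1))) (Set.Icc (n:ℝ) (n + 1)) x := by
    intro x hx
    have hx0 : 0 < x := by linarith [hx.1]
    refine HasDerivAt.hasDerivWithinAt ?_
    refine HasDerivAt.mul (hα x hx0).ofReal_comp ?_
    have := (hasDerivAt_id (x : ℂ)).cpow_const (c := s) (Or.inl (by simpa using hx0))
    have := this.comp_ofReal
    simpa using this
  have hb : ∀ x ∈ Set.Ico (n:ℝ) (n + 1),
      ‖(α' x : ℂ) * (x : ℂ) ^ s + (α x : ℂ) * (s * (x : ℂ) ^ (s - 1))‖ ≤ (1 + Λ * (1 + |t|)) / (M * √M) := by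
    intro x hx
    have hx0 : 0 < x := by linarith [hx.1]
    have hMx : M ≤ x := hMn.trans hx.1
    have e1 : ‖(x : ℂ) ^ s‖ = 1 / √x := by
      rw [Complex.norm_cpow_eq_rpow_re_of_pos hx0, hsre, Real.rpow_neg hx0.le, Real.sqrt_eq_rpow]
      simp
    have e2 : ‖(x : ℂ) ^ (s - 1)‖ = 1 / (x * √x) := by
      rw [Complex.norm_cpow_eq_rpow_re_of_pos hx0, Complex.sub_re, hsre, Complex.one_re, Real.rpow_sub hx0,
        Real.rpow_neg hx0.le, Real.sqrt_eq_rpow, Real.rpow_one]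
      field_simp
    have hle : 1 / (x * √x) ≤ 1 / (M * √M) := by
      refine one_div_le_one_div_of_le (by positivity) ?_
      exact mul_le_mul hMx (Real.sqrt_le_sqrt hMx) (Real.sqrt_nonneg _) hx0.le
    calc _ ≤ ‖(α' x : ℂ) * (x : ℂ) ^ s‖ + ‖(α x : ℂ) * (s * (x : ℂ) ^ (s - 1))‖ := norm_add_le _ _
      _ ≤ (1 / x) * (1 / √x) + Λ * ((1 + |t|) * (1 / (x * √x))) := by
          rw [norm_mul, norm_mul, norm_mul, e1, e2, Complex.norm_real, Complex.norm_real,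
            Real.norm_eq_abs, Real.norm_eq_abs]
          refine add_le_add (mul_le_mul_of_nonneg_right (hα' x (by linarith)) (by positivity)) ?_
          refine mul_le_mul (hΛ x hx.1 hx.2.le) ?_ (by positivity) hΛ0
          exact mul_le_mul_of_nonneg_right hsn (by positivity)
      _ = (1 + Λ * (1 + |t|)) * (1 / (x * √x)) := by field_simp
      _ ≤ (1 + Λ * (1 + |t|)) * (1 / (M * √M)) := mul_le_mul_of_nonneg_left hle (by positivity)
      _ = _ := by ring
  have := norm_image_sub_le_of_norm_deriv_le_segment' hder hb (n + 1) (Set.right_mem_Icc.2 (by linarith))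
  simpa using this

/-- The two kinds of smooth coefficients. -/
def Smooth (a : ℕ → ℂ) : Prop := a = (fun _ => (1 : ℂ)) ∨ a = (fun n : ℕ => (Real.log n : ℂ))

lemma smooth_var {a : ℕ → ℂ} (ha : Smooth a) (Λ t M : ℝ) (hΛ1 : 1 ≤ Λ) (hM : 1 ≤ M) (hΛ : Real.log (2 * M) ≤ Λ)
    (n : ℕ) (hMn : M ≤ n) (hn2 : (n:ℝ) + 1 ≤ 2 * M) :
    ‖a (n + 1) * ((n + 1 : ℕ) : ℂ) ^ (-(1 / 2 : ℂ) - Complex.I * t)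
      - a n * (n : ℂ) ^ (-(1 / 2 : ℂ) - Complex.I * t)‖ ≤ (1 + Λ * (1 + |t|)) / (M * √M) := by
  have hn : 1 ≤ n := by
    have : (1:ℝ) ≤ n := hM.trans hMn
    exact_mod_cast this
  rcases ha with rfl | rfl
  · have := variation (fun _ => 1) (fun _ => 0) (fun x _ => hasDerivAt_const x 1) Λ t n hn
      (by intro x _ _; simpa using hΛ1) (by intro x hx; rw [abs_zero]; positivity) M hM hMn
    simpa using this
  · have := variation Real.log (fun x => x⁻¹) (fun x hx => Real.hasDerivAt_log hx.ne') Λ t n hn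
      (by
        intro x h1 h2
        have : 1 ≤ x := by linarith
        rw [abs_of_nonneg (Real.log_nonneg this)]
        exact (Real.log_le_log (by linarith) (by linarith)).trans hΛ)
      (by intro x hx; rw [abs_of_nonneg (by positivity), one_div]) M hM hMn
    simpa using this

lemma smooth_norm {a : ℕ → ℂ} (ha : Smooth a) (Λ M : ℝ) (hΛ1 : 1 ≤ Λ) (hΛ : Real.log (2 * M) ≤ Λ)
    (n : ℕ) (hn : 1 ≤ n) (hn2 : (n:ℝ) ≤ 2 * M) : ‖a n‖ ≤ Λ := by
  have hn' : (1:ℝ) ≤ n := by exact_mod_cast hn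
  rcases ha with rfl | rfl
  · simpa using hΛ1
  · beta_reduce
    rw [Complex.norm_real, Real.norm_eq_abs, abs_of_nonneg (Real.log_nonneg hn')]
    exact (Real.log_le_log (by linarith) hn2).trans hΛ

lemma card_le (M : ℝ) (hM : 1 ≤ M) : ((⌊2 * M⌋₊ - ⌊M⌋₊ : ℕ) : ℝ) ≤ 2 * M := by
  have h1 : ((⌊2 * M⌋₊ - ⌊M⌋₊ : ℕ) : ℝ) ≤ (⌊2 * M⌋₊ : ℝ) := by exact_mod_cast Nat.sub_le _ _
  exact h1.trans (Nat.floor_le (by linarith))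

lemma g_triv {a : ℕ → ℂ} (ha : Smooth a) (Λ t M : ℝ) (hΛ1 : 1 ≤ Λ) (hM : 1 ≤ M) (hΛ : Real.log (2 * M) ≤ Λ)
    (z : ℂ) (hz : ‖z‖ = 1) :
    ‖∑ n ∈ Ioc ⌊M⌋₊ ⌊2 * M⌋₊, (a n * (n : ℂ) ^ (-(1 / 2 : ℂ) - Complex.I * t)) * z ^ n‖ ≤ 2 * Λ * √M := by
  have : ∀ n ∈ Ioc ⌊M⌋₊ ⌊2 * M⌋₊, ‖(a n * (n : ℂ) ^ (-(1 / 2 : ℂ) - Complex.I * t)) * z ^ n‖ ≤ Λ / √M := by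
    intro n hn
    have h1 := mem_Ioc.1 hn
    have h2 : (n:ℝ) ≤ 2 * M := (Nat.le_floor_iff' (by omega)).1 h1.2
    have h3 : M < n := (Nat.floor_lt (by linarith)).1 h1.1
    rw [norm_mul, norm_pow, hz, one_pow, mul_one, norm_mul, norm_cpow_half n (by omega), mul_one_div]
    exact div_le_div₀ (by linarith) (smooth_norm ha Λ M hΛ1 hΛ n (by omega) h2) (by positivity)
      (Real.sqrt_le_sqrt h3.le)
  refine (norm_sum_le _ _).trans ((sum_le_sum this).trans ?_)
  rw [sum_const, Nat.card_Ioc, nsmul_eq_mul]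
  have h5 : √M * √M = M := Real.mul_self_sqrt (by linarith)
  have h6 : 0 < √M := Real.sqrt_pos.2 (by linarith)
  calc _ ≤ 2 * M * (Λ / √M) := mul_le_mul_of_nonneg_right (card_le M hM) (by positivity)
    _ = _ := by rw [← h5]; field_simp; simp

lemma g_dual {a : ℕ → ℂ} (ha : Smooth a) (Λ t M : ℝ) (hΛ1 : 1 ≤ Λ) (hM : 1 ≤ M) (hΛ : Real.log (2 * M) ≤ Λ)
    (z : ℂ) (hz : ‖z‖ = 1) (y : ℝ) (hy : 0 < y) (hz1 : y ≤ ‖z - 1‖) :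
    ‖∑ n ∈ Ioc ⌊M⌋₊ ⌊2 * M⌋₊, (a n * (n : ℂ) ^ (-(1 / 2 : ℂ) - Complex.I * t)) * z ^ n‖
      ≤ 10 * (1 + |t|) * Λ / (√M * y) := by
  have hne : z ≠ 1 := by rintro rfl; simp at hz1; linarith
  have h6 : 0 < √M := Real.sqrt_pos.2 (by linarith)
  have habs := abs_nonneg t
  have := abel_bound z hz hne (fun n => a n * (n : ℂ) ^ (-(1 / 2 : ℂ) - Complex.I * t)) ⌊M⌋₊ ⌊2 * M⌋₊
    ((1 + Λ * (1 + |t|)) / (M * √M)) (Λ / √M) (by positivity) (by positivity) ?_ ?_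
  · refine this.trans ?_
    have h7 : 2 / ‖z - 1‖ ≤ 2 / y := by gcongr
    have h8 : Λ / √M + ((⌊2 * M⌋₊ - ⌊M⌋₊ : ℕ) : ℝ) * ((1 + Λ * (1 + |t|)) / (M * √M))
        ≤ 5 * (1 + |t|) * Λ / √M := by
      calc _ ≤ Λ / √M + (2 * M) * ((1 + Λ * (1 + |t|)) / (M * √M)) := by
            gcongr; exact card_le M hM
        _ = (Λ + 2 * (1 + Λ * (1 + |t|))) / √M := by field_simp
        _ ≤ _ := by
            refine div_le_div_of_nonneg_right ?_ h6.le
            nlinarith [mul_nonneg habs (by linarith : 0 ≤ Λ)]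
    calc _ ≤ (5 * (1 + |t|) * Λ / √M) * (2 / y) := mul_le_mul h8 h7 (by positivity) (by positivity)
      _ = _ := by field_simp; norm_num
  · intro h
    have h2 : ((⌊2 * M⌋₊ : ℕ):ℝ) ≤ 2 * M := Nat.floor_le (by linarith)
    have h3 : M < (⌊2 * M⌋₊ : ℕ) := (Nat.floor_lt (by linarith)).1 h
    rw [norm_mul, norm_cpow_half _ (by omega), mul_one_div]
    exact div_le_div₀ (by linarith) (smooth_norm ha Λ M hΛ1 hΛ _ (by omega) h2) (by positivity)
      (Real.sqrt_le_sqrt h3.le)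
  · intro n h1 h2
    refine smooth_var ha Λ t M hΛ1 hM hΛ n ?_ ?_
    · exact ((Nat.floor_lt (by linarith)).1 h1).le
    · have : ((n + 1 : ℕ) : ℝ) ≤ 2 * M := (Nat.le_floor_iff (by linarith)).1 h2
      push_cast at this; exact this

end DPB


namespace DPB

/-- Size of the dual coefficients. -/
noncomputable def Ld (d : ℕ) (M E : ℝ) (i : ℕ) : ℝ :=
  if M * 2 ^ i ≤ d then E else E * √(d / (M * 2 ^ i))

lemma Ld_nonneg (d : ℕ) (M E : ℝ) (hE : 0 ≤ E) (i : ℕ) : 0 ≤ Ld d M E i := by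
  unfold Ld; split_ifs <;> positivity

lemma Ld_sq (d : ℕ) (M E c Y : ℝ) (hM : 1 ≤ M) (hc : 0 ≤ c) (hY : Y ≤ c * M) (i : ℕ) :
    (d + 2 ^ (i + 1) * Y) * Ld d M E i ^ 2 ≤ (1 + 2 * c) * d * E ^ 2 := by
  have h2 : (0:ℝ) < 2 ^ i := by positivity
  have h3 : (2:ℝ) ^ (i + 1) * Y ≤ 2 * c * (M * 2 ^ i) := by
    rw [pow_succ]; nlinarith
  unfold Ld
  split_ifs with h
  · refine mul_le_mul_of_nonneg_right ?_ (sq_nonneg _)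
    nlinarith
  · push Not at h
    have h0 : 0 < M * 2 ^ i := by positivity
    have hd : (0:ℝ) ≤ d := Nat.cast_nonneg d
    rw [mul_pow, Real.sq_sqrt (by positivity)]
    have : (d + 2 ^ (i + 1) * Y) * (d / (M * 2 ^ i)) ≤ (1 + 2 * c) * d := by
      rw [mul_div_assoc', div_le_iff₀ h0]
      nlinarith [mul_nonneg hd hc]
    calc _ = ((d + 2 ^ (i + 1) * Y) * (d / (M * 2 ^ i))) * E ^ 2 := by ring
      _ ≤ _ := mul_le_mul_of_nonneg_right this (sq_nonneg _)

lemma coef_bd {d : ℕ} [NeZero d] {a : ℕ → ℂ} (ha : Smooth a) (Λ t M : ℝ) (hΛ1 : 1 ≤ Λ) (hM : 1 ≤ M)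
    (hΛ : Real.log (2 * M) ≤ Λ) (b : ℕ) (hb : 1 ≤ b) (hbd : 2 * b ≤ d) (z : ℂ) (hz : ‖z‖ = 1)
    (hz1 : ‖z - 1‖ = ‖(ZMod.stdAddChar (b : ZMod d) : ℂ) - 1‖) :
    ‖(∑ n ∈ Ioc ⌊M⌋₊ ⌊2 * M⌋₊, (a n * (n : ℂ) ^ (-(1 / 2 : ℂ) - Complex.I * t)) * z ^ n) / (√d : ℝ)‖
      ≤ Ld d M (10 * (1 + |t|) * Λ) (Nat.log 2 b) / √b := by
  have hd0 : (0:ℝ) < d := by exact_mod_cast NeZero.pos d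
  have hb0 : (0:ℝ) < b := by exact_mod_cast hb
  have hsd : 0 < √(d:ℝ) := Real.sqrt_pos.2 hd0
  have hsb : 0 < √(b:ℝ) := Real.sqrt_pos.2 hb0
  have hsM : 0 < √M := Real.sqrt_pos.2 (by linarith)
  have habs := abs_nonneg t
  rw [norm_div, Complex.norm_real, Real.norm_eq_abs, abs_of_pos hsd]
  have hlog1 : (2:ℝ) ^ (Nat.log 2 b) ≤ b := by exact_mod_cast Nat.pow_log_le_self 2 (by omega)
  have hlog2 : (b:ℝ) ≤ 2 * 2 ^ (Nat.log 2 b) := by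
    have := (Nat.lt_pow_succ_log_self (by norm_num : 1 < 2) b).le
    rw [pow_succ'] at this
    exact_mod_cast this
  unfold Ld
  split_ifs with h
  · rw [div_le_div_iff₀ hsd hsb]
    have h1 := g_triv ha Λ t M hΛ1 hM hΛ z hz
    have h2 : √M * √b ≤ 2 * √d := by
      rw [← Real.sqrt_mul (by linarith)]
      have : (2:ℝ) = √4 := by
        rw [show (4:ℝ) = 2 ^ 2 by norm_num]; exact (Real.sqrt_sq (by norm_num)).symm
      rw [this, ← Real.sqrt_mul (by norm_num)]
      refine Real.sqrt_le_sqrt ?_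
      nlinarith
    calc _ ≤ 2 * Λ * √M * √b := mul_le_mul_of_nonneg_right h1 hsb.le
      _ = 2 * Λ * (√M * √b) := by ring
      _ ≤ 2 * Λ * (2 * √d) := mul_le_mul_of_nonneg_left h2 (by positivity)
      _ ≤ _ := by
        have : 0 ≤ Λ * √d := by positivity
        nlinarith [mul_nonneg habs this]
  · have hy : 0 < 4 * (b:ℝ) / d := by positivity
    have h1 := g_dual ha Λ t M hΛ1 hM hΛ z hz (4 * b / d) hy (by
      rw [hz1]; exact norm_stdAddChar_sub_one b hbd)
    have h2 : √(d / (M * 2 ^ (Nat.log 2 b)) : ℝ) ≥ √(d / (M * b)) := by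
      refine Real.sqrt_le_sqrt ?_
      gcongr
    refine (div_le_div_of_nonneg_right h1 hsd.le).trans ?_
    rw [Real.sqrt_div hd0.le (M * (b:ℝ)), Real.sqrt_mul (by linarith) (b:ℝ)] at h2
    calc _ = (10 * (1 + |t|) * Λ / 4) * (√d * √d) / (√M * (√b * √b)) / √d := by
            rw [Real.mul_self_sqrt hd0.le, Real.mul_self_sqrt hb0.le]; field_simp
      _ = (10 * (1 + |t|) * Λ / 4) * (√d / (√M * √b)) / √b := by field_simp
      _ ≤ _ := by
        refine div_le_div_of_nonneg_right ?_ hsb.le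
        refine mul_le_mul ?_ h2 (by positivity) (by positivity)
        have : 0 ≤ 10 * (1 + |t|) * Λ := by positivity
        linarith

lemma dual_decomp {d : ℕ} (hd : 2 ≤ d) [NeZero d] {a : ℕ → ℂ} (ha : Smooth a) (Λ t M : ℝ) (hΛ1 : 1 ≤ Λ)
    (hM : 1 ≤ M) (hΛ : Real.log (2 * M) ≤ Λ) :
    ∃ f g : ℕ → DirichletCharacter ℂ d → ℂ,
      (∀ i, PolyBd d (f i) (2 ^ (i + 1)) 1 (Ld d M (10 * (1 + |t|) * Λ) i)) ∧
      (∀ i, PolyBd d (g i) (2 ^ (i + 1)) 1 (Ld d M (10 * (1 + |t|) * Λ) i)) ∧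
      ∀ χ : DirichletCharacter ℂ d, χ.IsPrimitive → ‖Kp d a M t χ‖ ≤
        ∑ i ∈ range (Nat.log 2 d + 1), (‖f i χ⁻¹‖ + ‖g i χ⁻¹‖) := by
  have hd0 : (0:ℝ) < d := by exact_mod_cast NeZero.pos d
  have hsd : 0 < √(d:ℝ) := Real.sqrt_pos.2 hd0
  have habs := abs_nonneg t
  set G : ZMod d → ℂ := fun b => (∑ n ∈ Ioc ⌊M⌋₊ ⌊2 * M⌋₊,
    (a n * (n : ℂ) ^ (-(1 / 2 : ℂ) - Complex.I * t)) * (ZMod.stdAddChar (-b) : ℂ) ^ n) / (√d : ℝ) with hG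
  have hnorm : ∀ b : ZMod d, ‖(ZMod.stdAddChar b : ℂ)‖ = 1 := fun b => AddChar.norm_apply _ _
  have hneg : ∀ b : ZMod d, ‖(ZMod.stdAddChar (-b) : ℂ) - 1‖ = ‖(ZMod.stdAddChar b : ℂ) - 1‖ := by
    intro b
    have h1 : (ZMod.stdAddChar (-b) : ℂ) * ZMod.stdAddChar b = 1 := by
      rw [← AddChar.map_add_eq_mul]; simp
    have h2 : (ZMod.stdAddChar (-b) : ℂ) - 1 = - (ZMod.stdAddChar (-b) : ℂ) * (ZMod.stdAddChar b - 1) := by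
      linear_combination h1
    rw [h2, norm_mul, norm_neg, hnorm, one_mul]
  have hE0 : 0 ≤ 10 * (1 + |t|) * Λ := by positivity
  obtain ⟨f, hf1, hf2⟩ := dyadic (d := d) (d / 2 + 1) (by omega) (fun b => G (b : ZMod d))
    (Ld d M (10 * (1 + |t|) * Λ)) (Ld_nonneg d M _ hE0) (by
      intro b h1 h2
      exact coef_bd ha Λ t M hΛ1 hM hΛ b h1 (by omega) _ (hnorm _) (hneg _))
  obtain ⟨g, hg1, hg2⟩ := dyadic (d := d) (d - d / 2) (by omega) (fun b => G (-(b : ZMod d)))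
    (Ld d M (10 * (1 + |t|) * Λ)) (Ld_nonneg d M _ hE0) (by
      intro b h1 h2
      refine coef_bd ha Λ t M hΛ1 hM hΛ b h1 (by omega) _ (hnorm _) ?_
      rw [neg_neg])
  refine ⟨f, g, hf1, hg1, fun χ hχ => ?_⟩
  set τ := gaussSum χ ZMod.stdAddChar with hτ
  have hτn : ‖τ‖ = √d := by
    rw [← norm_gaussSum_sq hχ, Real.sqrt_sq (norm_nonneg _)]
  have key : Kp d a M t χ * (star τ / (√d : ℝ)) = ∑ b : ZMod d, χ⁻¹ b * G b := by
    simp only [hG]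
    unfold Kp
    rw [sum_mul]
    simp only [mul_div_assoc', mul_sum, sum_div]
    rw [sum_comm]
    refine sum_congr rfl fun n _ => ?_
    rw [← sum_div]
    congr 1
    have := char_dual hχ (n : ZMod d)
    calc _ = a n * (n : ℂ) ^ (-(1 / 2 : ℂ) - Complex.I * t) * (χ n * star τ) := by ring
      _ = _ := by
        rw [this, mul_sum]
        refine sum_congr rfl fun b _ => ?_
        rw [← AddChar.map_nsmul_eq_pow, nsmul_eq_mul, show -(b * (n : ZMod d)) = (n : ZMod d) * -b by ring]
        ring
  have h1 : ‖Kp d a M t χ‖ = ‖∑ b : ZMod d, χ⁻¹ b * G b‖ := by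
    rw [← key, norm_mul, norm_div, norm_star, hτn, Complex.norm_real, Real.norm_eq_abs, abs_of_pos hsd,
      div_self hsd.ne', mul_one]
  rw [h1]
  refine (zmod_fold hd _ _).trans ?_
  rw [hf2, hg2, sum_add_distrib]
  exact add_le_add (norm_sum_le _ _) (norm_sum_le _ _)

lemma one_term {d : ℕ} [NeZero d] {f K2 : DirichletCharacter ℂ d → ℂ} {M E c Y L2 H : ℝ} {i k : ℕ}
    (hf : PolyBd d f (2 ^ (i + 1)) 1 (Ld d M E i)) (hK : PolyBd d K2 Y k L2) (hY : 1 ≤ Y) (hM : 1 ≤ M)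
    (hc : 0 ≤ c) (hYM : Y ≤ c * M) (hE : 0 ≤ E) (hi : 2 ^ i ≤ d) (hH : 1 + Real.log (2 * d * Y) ≤ H) :
    ∑ χ : DirichletCharacter ℂ d, (‖f χ⁻¹‖ * ‖K2 χ‖) ^ 2
      ≤ (1 + 2 * c) * d * E ^ 2 * L2 ^ 2 * H ^ ((1 + k) * (1 + k)) := by
  have h2 : (1:ℝ) ≤ 2 ^ (i + 1) := one_le_pow₀ (by norm_num)
  have hmul := PolyBd.mul h2 hY (Ld_nonneg d M E hE i) hf hK.star
  have hX : (1:ℝ) ≤ 2 ^ (i + 1) * Y := by nlinarith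
  have hsq := PolyBd.sq hX hmul
  have hlhs : ∑ χ : DirichletCharacter ℂ d, (‖f χ⁻¹‖ * ‖K2 χ‖) ^ 2 =
      ∑ χ : DirichletCharacter ℂ d, ‖f χ * star (K2 χ⁻¹)‖ ^ 2 := by
    refine Fintype.sum_equiv (Equiv.inv _) _ _ fun χ => ?_
    simp
  rw [hlhs]
  refine hsq.trans ?_
  have hlog0 : 0 ≤ Real.log (2 ^ (i + 1) * Y) := Real.log_nonneg hX
  have hlog : Real.log (2 ^ (i + 1) * Y) ≤ Real.log (2 * d * Y) := by
    refine Real.log_le_log (by linarith) ?_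
    refine mul_le_mul_of_nonneg_right ?_ (by linarith)
    rw [pow_succ']
    have : ((2 ^ i : ℕ) : ℝ) ≤ d := by exact_mod_cast hi
    push_cast at this
    linarith
  have hpow : (1 + Real.log (2 ^ (i + 1) * Y)) ^ ((1 + k) * (1 + k)) ≤ H ^ ((1 + k) * (1 + k)) :=
    pow_le_pow_left₀ (by linarith) (by linarith) _
  have hLd := Ld_sq d M E c Y hM hc hYM i
  have hH0 : 0 ≤ H := by linarith
  calc _ = ((d + 2 ^ (i + 1) * Y) * Ld d M E i ^ 2) * (L2 ^ 2 *
        (1 + Real.log (2 ^ (i + 1) * Y)) ^ ((1 + k) * (1 + k))) := by ring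
    _ ≤ ((1 + 2 * c) * d * E ^ 2) * (L2 ^ 2 * H ^ ((1 + k) * (1 + k))) := by
      refine mul_le_mul hLd (mul_le_mul_of_nonneg_left hpow (sq_nonneg _)) (by positivity) (by positivity)
    _ = _ := by ring

open Classical in
/-- The dual second moment. -/
lemma dual_moment {d : ℕ} (hd : 2 ≤ d) [NeZero d] {a : ℕ → ℂ} (ha : Smooth a) (Λ t M : ℝ) (hΛ1 : 1 ≤ Λ)
    (hM : 1 ≤ M) (hΛ : Real.log (2 * M) ≤ Λ) {K2 : DirichletCharacter ℂ d → ℂ} {c Y L2 H : ℝ} {k : ℕ}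
    (hK : PolyBd d K2 Y k L2) (hY : 1 ≤ Y) (hc : 0 ≤ c) (hYM : Y ≤ c * M)
    (hH : 1 + Real.log (2 * d * Y) ≤ H) :
    ∑ χ : DirichletCharacter ℂ d with χ.IsPrimitive, ‖Kp d a M t χ * K2 χ‖ ^ 2
      ≤ 4 * ((Nat.log 2 d + 1 : ℕ) : ℝ) ^ 2 *
        ((1 + 2 * c) * d * (10 * (1 + |t|) * Λ) ^ 2 * L2 ^ 2 * H ^ ((1 + k) * (1 + k))) := by
  obtain ⟨f, g, hf, hg, hfg⟩ := dual_decomp hd ha Λ t M hΛ1 hM hΛ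
  have habs := abs_nonneg t
  have hE0 : 0 ≤ 10 * (1 + |t|) * Λ := by positivity
  set I := Nat.log 2 d + 1 with hI
  set W := (1 + 2 * c) * d * (10 * (1 + |t|) * Λ) ^ 2 * L2 ^ 2 * H ^ ((1 + k) * (1 + k)) with hW
  have hpt : ∀ χ : DirichletCharacter ℂ d, χ.IsPrimitive → ‖Kp d a M t χ * K2 χ‖ ^ 2 ≤
      I * ∑ i ∈ range I, (2 * (‖f i χ⁻¹‖ * ‖K2 χ‖) ^ 2 + 2 * (‖g i χ⁻¹‖ * ‖K2 χ‖) ^ 2) := by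
    intro χ hχ
    have h1 : ‖Kp d a M t χ * K2 χ‖ ≤ ∑ i ∈ range I, (‖f i χ⁻¹‖ * ‖K2 χ‖ + ‖g i χ⁻¹‖ * ‖K2 χ‖) := by
      rw [norm_mul]
      refine (mul_le_mul_of_nonneg_right (hfg χ hχ) (norm_nonneg _)).trans (le_of_eq ?_)
      rw [sum_mul]
      exact sum_congr rfl fun i _ => add_mul _ _ _
    refine (pow_le_pow_left₀ (norm_nonneg _) h1 2).trans ?_
    refine (sq_sum_le_card_mul_sum_sq).trans ?_
    rw [card_range]
    refine mul_le_mul_of_nonneg_left (sum_le_sum fun i _ => ?_) (Nat.cast_nonneg _)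
    nlinarith [sq_nonneg (‖f i χ⁻¹‖ * ‖K2 χ‖ - ‖g i χ⁻¹‖ * ‖K2 χ‖)]
  calc _ ≤ ∑ χ : DirichletCharacter ℂ d with χ.IsPrimitive,
        (I:ℝ) * ∑ i ∈ range I, (2 * (‖f i χ⁻¹‖ * ‖K2 χ‖) ^ 2 + 2 * (‖g i χ⁻¹‖ * ‖K2 χ‖) ^ 2) :=
        sum_le_sum fun χ hχ => hpt χ (mem_filter.1 hχ).2
    _ ≤ ∑ χ : DirichletCharacter ℂ d,
        (I:ℝ) * ∑ i ∈ range I, (2 * (‖f i χ⁻¹‖ * ‖K2 χ‖) ^ 2 + 2 * (‖g i χ⁻¹‖ * ‖K2 χ‖) ^ 2) :=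
        sum_le_sum_of_subset_of_nonneg (filter_subset _ _) (fun _ _ _ => by positivity)
    _ = (I:ℝ) * ∑ i ∈ range I, (2 * ∑ χ : DirichletCharacter ℂ d, (‖f i χ⁻¹‖ * ‖K2 χ‖) ^ 2
          + 2 * ∑ χ : DirichletCharacter ℂ d, (‖g i χ⁻¹‖ * ‖K2 χ‖) ^ 2) := by
        rw [← mul_sum, sum_comm]
        simp only [sum_add_distrib, mul_sum]
    _ ≤ (I:ℝ) * ∑ i ∈ range I, (2 * W + 2 * W) := by
        refine mul_le_mul_of_nonneg_left (sum_le_sum fun i hi => ?_) (Nat.cast_nonneg _)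
        have hi2 : 2 ^ i ≤ d := by
          have := mem_range.1 hi
          exact (Nat.pow_le_pow_right (by norm_num) (by omega)).trans (Nat.pow_log_le_self 2 (by omega))
        have h1 := one_term (hf i) hK hY hM hc hYM hE0 hi2 hH
        have h2 := one_term (hg i) hK hY hM hc hYM hE0 hi2 hH
        linarith
    _ = _ := by rw [sum_const, card_range, nsmul_eq_mul]; ring

end DPB


namespace DPB

lemma combo {ι : Type*} [Fintype ι] [DecidableEq ι] [Nonempty ι] (P : ι → ℝ) (hP : ∀ i, 1 ≤ P i) (L c : ℝ)
    (hL : 1 ≤ L) (hc : 1 ≤ c) (hprod : ∏ i, P i ≤ c * L ^ 5) :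
    (∃ S : Finset ι, ∏ i ∈ S, P i ≤ L ^ 3 ∧ ∏ i ∈ Sᶜ, P i ≤ c * L ^ 3) ∨
    (∃ (j : ι) (S : Finset ι), j ∉ S ∧ L < P j ∧ ∏ i ∈ S, P i ≤ P j ∧ ∏ i ∈ (insert j S)ᶜ, P i ≤ c * L ^ 3) := by
  have h3 : 1 ≤ L ^ 3 := one_le_pow₀ hL
  have h2 : 1 ≤ L ^ 2 := one_le_pow₀ hL
  have hone : ∀ S : Finset ι, 1 ≤ ∏ i ∈ S, P i := fun S => one_le_prod_real S P (fun i _ => hP i)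
  have key : ∀ S : Finset ι, L ^ 2 ≤ ∏ i ∈ S, P i → ∏ i ∈ Sᶜ, P i ≤ c * L ^ 3 := by
    intro S hS
    rw [← Finset.prod_mul_prod_compl S] at hprod
    have h0 : 0 ≤ ∏ i ∈ Sᶜ, P i := by linarith [hone Sᶜ]
    have h4 : L ^ 2 * ∏ i ∈ Sᶜ, P i ≤ L ^ 2 * (c * L ^ 3) := by
      calc _ ≤ (∏ i ∈ S, P i) * ∏ i ∈ Sᶜ, P i := mul_le_mul_of_nonneg_right hS h0
        _ ≤ _ := hprod
        _ = _ := by ring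
    exact le_of_mul_le_mul_left h4 (by linarith)
  obtain ⟨j, -, hj⟩ := Finset.exists_max_image (univ : Finset ι) P univ_nonempty
  by_cases h : ∃ i, i ≠ j ∧ L < P i
  · obtain ⟨i, hij, hi⟩ := h
    refine Or.inr ⟨j, {i}, by simpa using hij.symm, hi.trans_le (hj i (mem_univ _)), ?_, ?_⟩
    · simpa using hj i (mem_univ _)
    · apply key
      rw [prod_insert (by simpa using hij.symm), prod_singleton]
      have := hj i (mem_univ _)
      nlinarith
  · push Not at h
    by_cases h' : L ^ 3 < P j
    · refine Or.inr ⟨j, ∅, by simp, ?_, ?_, ?_⟩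
      · nlinarith
      · simpa using hP j
      · apply key
        rw [prod_insert (by simp), prod_empty, mul_one]
        nlinarith
    · push Not at h'
      obtain ⟨S, hS, hmax⟩ := Finset.exists_max_image
        ((univ : Finset (Finset ι)).filter (fun S => j ∈ S ∧ ∏ i ∈ S, P i ≤ L ^ 3)) Finset.card
        ⟨{j}, by simpa using h'⟩
      simp only [mem_filter, mem_univ, true_and] at hS hmax
      refine Or.inl ⟨S, hS.2, ?_⟩
      by_cases hu : S = univ
      · rw [hu]; simp; nlinarith
      · obtain ⟨i, hi⟩ : ∃ i, i ∉ S := by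
          by_contra hcon
          push Not at hcon
          exact hu (eq_univ_iff_forall.2 hcon)
        apply key
        have hij : i ≠ j := by rintro rfl; exact hi hS.1
        by_contra hlt
        push Not at hlt
        have := hmax (insert i S) ⟨mem_insert_of_mem hS.1, by
          rw [prod_insert hi]
          calc _ ≤ L * L ^ 2 := mul_le_mul (h i hij) hlt.le (by linarith [hone S]) (by linarith)
            _ = L ^ 3 := by ring⟩
        rw [card_insert_of_notMem hi] at this
        omega

end DPB


namespace DPB

/-- The hypotheses of the main theorem (with the exponent relaxed to `15/8`). -/
structure Dat (d : ℕ) (N : ℝ) (Nf : Fin 40 → ℝ) (a : Fin 40 → ℕ → ℂ) : Prop where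
  hd : 2 ≤ d
  hN : 2 ≤ N
  hNf : ∀ j, 1 / 2 ≤ Nf j
  hprod : (∏ j, Nf j) ≤ N ^ (15 / 8 : ℝ)
  ha : ∀ j, a j = (fun _ => (1 : ℂ)) ∨
            a j = (fun n => ((ArithmeticFunction.moebius n : ℤ) : ℂ)) ∨
            a j = (fun n : ℕ => (Real.log n : ℂ))
  hs : ∀ j, N ^ (1 / 10 : ℝ) < Nf j → Smooth (a j)

/-- The lengths rounded up to one. -/
noncomputable def Pf (Nf : Fin 40 → ℝ) (j : Fin 40) : ℝ := max (Nf j) 1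

/-- The logarithmic quantity. -/
noncomputable def HH (d : ℕ) (N : ℝ) : ℝ := 100 * Real.log (d * N)

variable {d : ℕ} {N : ℝ} {Nf : Fin 40 → ℝ} {a : Fin 40 → ℕ → ℂ}

lemma one_le_Pf (j : Fin 40) : 1 ≤ Pf Nf j := le_max_right _ _

lemma Dat.Pf_le (D : Dat d N Nf a) (j : Fin 40) : Pf Nf j ≤ 2 * Nf j := by
  have := D.hNf j
  exact max_le (by linarith) (by linarith)

lemma Dat.prodP (D : Dat d N Nf a) : ∏ j, Pf Nf j ≤ 2 ^ 40 * N ^ (15 / 8 : ℝ) := by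
  calc ∏ j, Pf Nf j ≤ ∏ j, 2 * Nf j :=
        prod_le_prod (fun j _ => by linarith [one_le_Pf (Nf := Nf) j]) (fun j _ => D.Pf_le j)
    _ = 2 ^ 40 * ∏ j, Nf j := by rw [prod_mul_distrib, prod_const, card_univ, Fintype.card_fin]
    _ ≤ _ := mul_le_mul_of_nonneg_left D.hprod (by positivity)

lemma prodS_one (S : Finset (Fin 40)) : 1 ≤ ∏ j ∈ S, Pf Nf j :=
  one_le_prod_real S _ (fun j _ => one_le_Pf j)

lemma prodS_le (S : Finset (Fin 40)) : ∏ j ∈ S, Pf Nf j ≤ ∏ j, Pf Nf j := by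
  rw [← Finset.prod_mul_prod_compl S]
  have h1 := prodS_one (Nf := Nf) S
  have h2 := prodS_one (Nf := Nf) Sᶜ
  nlinarith

lemma prod2_le (S : Finset (Fin 40)) : ∏ j ∈ S, (2 * Pf Nf j) ≤ 2 ^ 40 * ∏ j ∈ S, Pf Nf j := by
  rw [prod_mul_distrib, prod_const]
  refine mul_le_mul_of_nonneg_right ?_ (by linarith [prodS_one (Nf := Nf) S])
  refine pow_le_pow_right₀ (by norm_num) ?_
  simpa using card_le_univ S

lemma prod2_one (S : Finset (Fin 40)) : 1 ≤ ∏ j ∈ S, (2 * Pf Nf j) :=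
  one_le_prod_real S _ (fun j _ => by linarith [one_le_Pf (Nf := Nf) j])

lemma Dat.log_ge (D : Dat d N Nf a) : 2 * Real.log 2 ≤ Real.log (d * N) := by
  have h : (2:ℝ) ≤ d := by exact_mod_cast D.hd
  have : Real.log (2 ^ 2) ≤ Real.log (d * N) := by
    refine Real.log_le_log (by norm_num) ?_
    nlinarith [D.hN]
  rw [Real.log_pow] at this
  exact_mod_cast this

lemma Dat.log_one (D : Dat d N Nf a) : 1 ≤ Real.log (d * N) := by
  have := D.log_ge
  have := Real.log_two_gt_d9
  linarith

lemma Dat.HH_one (D : Dat d N Nf a) : 1 ≤ HH d N := by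
  have := D.log_one
  unfold HH; linarith

lemma Dat.logX (D : Dat d N Nf a) (S : Finset (Fin 40)) :
    1 + Real.log (2 * d * ∏ j ∈ S, (2 * Pf Nf j)) ≤ HH d N := by
  have hd : (2:ℝ) ≤ d := by exact_mod_cast D.hd
  have hN := D.hN
  have h1 := prod2_one (Nf := Nf) S
  have h2 : 2 * d * ∏ j ∈ S, (2 * Pf Nf j) ≤ 2 ^ 81 * (d * N ^ (15 / 8 : ℝ)) := by
    calc _ ≤ 2 * (d:ℝ) * (2 ^ 40 * (2 ^ 40 * N ^ (15 / 8 : ℝ))) := by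
          refine mul_le_mul_of_nonneg_left ?_ (by positivity)
          refine (prod2_le S).trans (mul_le_mul_of_nonneg_left ?_ (by positivity))
          exact (prodS_le S).trans D.prodP
      _ = _ := by ring
  have h3 := Real.log_le_log (by positivity) h2
  have hN0 : 0 < N := by linarith
  rw [Real.log_mul (x := 2 ^ 81) (by positivity) (by positivity),
    Real.log_mul (x := (d:ℝ)) (by positivity) (by positivity), Real.log_pow, Real.log_rpow hN0] at h3
  have h4 := D.log_ge
  have h5 := D.log_one
  have h6 : Real.log (d * N) = Real.log d + Real.log N := Real.log_mul (by positivity) (by positivity)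
  have h7 : 0 ≤ Real.log N := Real.log_nonneg (by linarith)
  have h8 : 0 ≤ Real.log d := Real.log_nonneg (by linarith)
  unfold HH
  push_cast at h3
  linarith

lemma Dat.log2P (D : Dat d N Nf a) (j : Fin 40) : Real.log (2 * Pf Nf j) ≤ HH d N := by
  have := D.logX {j}
  rw [prod_singleton] at this
  have hd : (2:ℝ) ≤ d := by exact_mod_cast D.hd
  have h1 := one_le_Pf (Nf := Nf) j
  have : Real.log (2 * Pf Nf j) ≤ Real.log (2 * d * (2 * Pf Nf j)) :=
    Real.log_le_log (by positivity) (by nlinarith)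
  linarith

lemma Dat.norm_a (D : Dat d N Nf a) (j : Fin 40) (n : ℕ) (hn : 1 ≤ n) (hn2 : (n:ℝ) ≤ 2 * Pf Nf j) :
    ‖a j n‖ ≤ HH d N := by
  rcases D.ha j with h | h | h
  · exact smooth_norm (Or.inl h) _ _ D.HH_one (D.log2P j) n hn hn2
  · rw [h]
    have : |ArithmeticFunction.moebius n| ≤ 1 := ArithmeticFunction.abs_moebius_le_one
    rw [Complex.norm_intCast]
    refine le_trans ?_ D.HH_one
    exact_mod_cast this
  · exact smooth_norm (Or.inr h) _ _ D.HH_one (D.log2P j) n hn hn2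

lemma Dat.poly (D : Dat d N Nf a) (t : ℝ) (S : Finset (Fin 40)) :
    PolyBd d (fun χ => ∏ j ∈ S, Kp d (a j) (Nf j) t χ) (∏ j ∈ S, (2 * Pf Nf j)) S.card (HH d N ^ S.card) := by
  have h1 := D.HH_one
  refine PolyBd.prod S _ _ _ (by linarith) (fun j => by linarith [one_le_Pf (Nf := Nf) j]) fun j _ => ?_
  exact PolyBd.Kp (a j) (Nf j) t _ _ (by linarith) (le_max_left _ _) (one_le_Pf j) (D.norm_a j)

lemma Dat.sec [NeZero d] (D : Dat d N Nf a) (t : ℝ) (S : Finset (Fin 40)) :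
    ∑ χ : DirichletCharacter ℂ d, ‖∏ j ∈ S, Kp d (a j) (Nf j) t χ‖ ^ 2
      ≤ (d + 2 ^ 40 * ∏ j ∈ S, Pf Nf j) * HH d N ^ 1800 := by
  refine (PolyBd.sq (prod2_one S) (D.poly t S)).trans ?_
  have hc : S.card ≤ 40 := by simpa using card_le_univ S
  have h1 := D.HH_one
  have hX := prod2_one (Nf := Nf) S
  have hlog0 := Real.log_nonneg hX
  have hd : (2:ℝ) ≤ d := by exact_mod_cast D.hd
  have hlog : 1 + Real.log (∏ j ∈ S, (2 * Pf Nf j)) ≤ HH d N := by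
    have := D.logX S
    have : Real.log (∏ j ∈ S, (2 * Pf Nf j)) ≤ Real.log (2 * d * ∏ j ∈ S, (2 * Pf Nf j)) :=
      Real.log_le_log (by linarith) (by nlinarith)
    linarith
  have hS1 := prodS_one (Nf := Nf) S
  refine mul_le_mul ?_ ?_ (by positivity) (by positivity)
  · linarith [prod2_le (Nf := Nf) S]
  · calc _ ≤ (HH d N ^ S.card) ^ 2 * HH d N ^ (S.card * S.card) := by
          refine mul_le_mul_of_nonneg_left ?_ (by positivity)
          exact pow_le_pow_left₀ (by linarith) hlog _
      _ = HH d N ^ (S.card * 2 + S.card * S.card) := by rw [← pow_mul, pow_add]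
      _ ≤ _ := by
        refine pow_le_pow_right₀ h1 ?_
        nlinarith

open Classical in
lemma Dat.secP [NeZero d] (D : Dat d N Nf a) (t : ℝ) (S : Finset (Fin 40)) :
    ∑ χ : DirichletCharacter ℂ d with χ.IsPrimitive, ‖∏ j ∈ S, Kp d (a j) (Nf j) t χ‖ ^ 2
      ≤ (d + 2 ^ 40 * ∏ j ∈ S, Pf Nf j) * HH d N ^ 1800 :=
  (sum_le_sum_of_subset_of_nonneg (filter_subset _ _) (fun _ _ _ => by positivity)).trans (D.sec t S)

lemma Dat.log2d (D : Dat d N Nf a) : ((Nat.log 2 d + 1 : ℕ) : ℝ) ≤ HH d N := by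
  have hd : (2:ℝ) ≤ d := by exact_mod_cast D.hd
  have h1 : ((2 ^ Nat.log 2 d : ℕ) : ℝ) ≤ d := by
    exact_mod_cast Nat.pow_log_le_self 2 (by have := D.hd; omega)
  push_cast at h1
  have h2 := Real.log_le_log (by positivity) h1
  rw [Real.log_pow] at h2
  have h3 := Real.log_two_gt_d9
  have h5 : Real.log d ≤ Real.log (d * N) := Real.log_le_log (by linarith) (by nlinarith [D.hN])
  have h6 := D.log_one
  have h7 : (0:ℝ) ≤ Nat.log 2 d := Nat.cast_nonneg _
  unfold HH
  push_cast
  nlinarith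

open Classical in
lemma Dat.dual [NeZero d] (D : Dat d N Nf a) (t : ℝ) (S : Finset (Fin 40)) (j : Fin 40) (hj : j ∉ S)
    (hsm : Smooth (a j)) (hN1 : 1 ≤ Nf j) (hS : ∏ i ∈ S, Pf Nf i ≤ Nf j) :
    ∑ χ : DirichletCharacter ℂ d with χ.IsPrimitive, ‖∏ i ∈ insert j S, Kp d (a i) (Nf i) t χ‖ ^ 2
      ≤ 2 ^ 60 * (1 + |t|) ^ 2 * d * HH d N ^ 1800 := by
  have hd : (2:ℝ) ≤ d := by exact_mod_cast D.hd
  have hc : S.card ≤ 40 := by simpa using card_le_univ S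
  have h1 := D.HH_one
  have hlogM : Real.log (2 * Nf j) ≤ HH d N := by
    have := D.log2P j
    rwa [Pf, max_eq_left hN1] at this
  have h := dual_moment D.hd hsm (HH d N) t (Nf j) h1 hN1 hlogM (D.poly t S) (prod2_one S) (c := 2 ^ 40)
    (by positivity) ((prod2_le S).trans (mul_le_mul_of_nonneg_left hS (by positivity))) (D.logX S)
  simp only [prod_insert hj]
  refine h.trans ?_
  have hI : ((Nat.log 2 d + 1 : ℕ) : ℝ) ^ 2 ≤ HH d N ^ 2 :=
    pow_le_pow_left₀ (Nat.cast_nonneg _) D.log2d 2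
  calc _ ≤ 4 * HH d N ^ 2 * ((1 + 2 * 2 ^ 40) * d * (10 * (1 + |t|) * HH d N) ^ 2 * (HH d N ^ S.card) ^ 2
        * HH d N ^ ((1 + S.card) * (1 + S.card))) := by
        refine mul_le_mul_of_nonneg_right ?_ (by positivity)
        linarith
    _ = (4 * (1 + 2 * 2 ^ 40) * 100) * (1 + |t|) ^ 2 * d *
        HH d N ^ (2 + 2 + S.card * 2 + (1 + S.card) * (1 + S.card)) := by
        rw [pow_add, pow_add, pow_add, pow_mul]; ring
    _ ≤ _ := by
        refine mul_le_mul ?_ (pow_le_pow_right₀ h1 (by nlinarith)) (by positivity) (by positivity)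
        refine mul_le_mul_of_nonneg_right (mul_le_mul_of_nonneg_right (by norm_num) (by positivity)) (by positivity)

lemma le_of_sq_le_sq' {x y : ℝ} (h : x ^ 2 ≤ y ^ 2) (hy : 0 ≤ y) : x ≤ y :=
  (le_abs_self x).trans (abs_le_of_sq_le_sq h hy)

lemma cs {ι : Type*} (s : Finset ι) (f g : ι → ℂ) (A B : ℝ) (hA : ∑ i ∈ s, ‖f i‖ ^ 2 ≤ A)
    (hB : ∑ i ∈ s, ‖g i‖ ^ 2 ≤ B) : (∑ i ∈ s, ‖f i * g i‖) ^ 2 ≤ A * B := by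
  have hA0 : 0 ≤ ∑ i ∈ s, ‖f i‖ ^ 2 := sum_nonneg fun _ _ => by positivity
  have hB0 : 0 ≤ ∑ i ∈ s, ‖g i‖ ^ 2 := sum_nonneg fun _ _ => by positivity
  simp only [norm_mul]
  exact (sum_mul_sq_le_sq_mul_sq s _ _).trans (mul_le_mul hA hB hB0 (hA0.trans hA))

open Classical in
/-- The full first moment. -/
noncomputable def Fsum (d : ℕ) [NeZero d] (Nf : Fin 40 → ℝ) (a : Fin 40 → ℕ → ℂ) (t : ℝ) : ℝ :=
  ∑ χ : DirichletCharacter ℂ d with χ.IsPrimitive, ‖∏ j, Kp d (a j) (Nf j) t χ‖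

/-- The target quantity. -/
noncomputable def VV (d : ℕ) (N : ℝ) : ℝ := (N + d) ^ 2 * N ^ (1 / 16 : ℝ) / d

lemma Dat.VV_sq (D : Dat d N Nf a) :
    (d:ℝ) ^ 2 + d * (N ^ (3 / 8 : ℝ)) ^ 3 + (N ^ (3 / 8 : ℝ)) ^ 5 ≤ 3 * VV d N ^ 2 := by
  have hd : (2:ℝ) ≤ d := by exact_mod_cast D.hd
  have hN := D.hN
  have hN0 : 0 ≤ N := by linarith
  have e3 : (N ^ (3 / 8 : ℝ)) ^ 3 = N * N ^ (1 / 8 : ℝ) := by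
    rw [← Real.rpow_natCast, ← Real.rpow_mul hN0]
    nth_rewrite 2 [← Real.rpow_one N]
    rw [← Real.rpow_add (by linarith)]; norm_num
  have e5 : (N ^ (3 / 8 : ℝ)) ^ 5 ≤ N ^ 2 := by
    rw [← Real.rpow_natCast, ← Real.rpow_mul hN0, ← Real.rpow_natCast N 2]
    refine Real.rpow_le_rpow_of_exponent_le (by linarith) (by norm_num)
  have e1 : (N ^ (1 / 16 : ℝ)) ^ 2 = N ^ (1 / 8 : ℝ) := by
    rw [← Real.rpow_natCast, ← Real.rpow_mul hN0]; norm_num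
  have e8 : 1 ≤ N ^ (1 / 8 : ℝ) := Real.one_le_rpow (by linarith) (by norm_num)
  have hV : VV d N ^ 2 = (N + d) ^ 4 * N ^ (1 / 8 : ℝ) / d ^ 2 := by
    unfold VV; rw [div_pow, mul_pow, e1]; ring
  rw [hV, e3, mul_div_assoc', le_div_iff₀ (by positivity)]
  set u := N ^ (1 / 8 : ℝ)
  have hd0 : (0:ℝ) ≤ d := by linarith
  have b1 : (d:ℝ) ^ 4 ≤ (N + d) ^ 4 := pow_le_pow_left₀ hd0 (by linarith) 4
  have b2 : (d:ℝ) ^ 3 * N ≤ (N + d) ^ 4 := by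
    rw [pow_succ (N + (d:ℝ))]
    exact mul_le_mul (pow_le_pow_left₀ hd0 (by linarith) 3) (by linarith) hN0 (by positivity)
  have b3 : (d:ℝ) ^ 2 * N ^ 2 ≤ (N + d) ^ 4 := by
    rw [show (N + (d:ℝ)) ^ 4 = (N + d) ^ 2 * (N + d) ^ 2 by ring]
    exact mul_le_mul (pow_le_pow_left₀ hd0 (by linarith) 2) (pow_le_pow_left₀ hN0 (by linarith) 2)
      (by positivity) (by positivity)
  have hp : (0:ℝ) ≤ (N + d) ^ 4 := by positivity
  have c1 : (N + d) ^ 4 ≤ (N + d) ^ 4 * u := le_mul_of_one_le_right hp e8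
  calc _ = (d:ℝ) ^ 4 + d ^ 3 * N * u + d ^ 2 * (N ^ (3 / 8 : ℝ)) ^ 5 := by ring
    _ ≤ (N + d) ^ 4 + (N + d) ^ 4 * u + (N + d) ^ 4 := by
      refine add_le_add (add_le_add b1 (mul_le_mul_of_nonneg_right b2 (by linarith))) ?_
      exact (mul_le_mul_of_nonneg_left e5 (by positivity)).trans b3
    _ ≤ _ := by linarith

lemma Dat.VV_one (D : Dat d N Nf a) : 1 ≤ VV d N := by
  have hd : (2:ℝ) ≤ d := by exact_mod_cast D.hd
  have hN := D.hN
  have e8 : 1 ≤ N ^ (1 / 16 : ℝ) := Real.one_le_rpow (by linarith) (by norm_num)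
  unfold VV
  rw [le_div_iff₀ (by linarith), one_mul]
  have : (d:ℝ) ≤ (N + d) ^ 2 := by nlinarith
  nlinarith

lemma Dat.per_t [NeZero d] (D : Dat d N Nf a) (t : ℝ) :
    Fsum d Nf a t ≤ 2 ^ 100 * HH d N ^ 1800 * VV d N * (1 + |t|) := by
  classical
  have hd : (2:ℝ) ≤ d := by exact_mod_cast D.hd
  have hN := D.hN
  have h1 := D.HH_one
  have hV1 := D.VV_one
  have habs := abs_nonneg t
  set L := N ^ (3 / 8 : ℝ) with hL
  have hL1 : 1 ≤ L := Real.one_le_rpow (by linarith) (by norm_num)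
  have hL5 : N ^ (15 / 8 : ℝ) = L ^ 5 := by
    rw [hL, ← Real.rpow_natCast, ← Real.rpow_mul (by linarith)]; norm_num
  have hP := D.prodP
  rw [hL5] at hP
  have hV := D.VV_sq
  rw [← hL] at hV
  have hL3 : 0 < L ^ 3 := by positivity
  have hL5' : 0 < L ^ 5 := by positivity
  have hd0 : (0:ℝ) ≤ d := by linarith
  have hT : 1 ≤ (1 + |t|) ^ 2 := one_le_pow₀ (by linarith)
  refine le_of_sq_le_sq' ?_ (by positivity)
  set R := HH d N ^ 1800 with hR
  have hR1 : 1 ≤ R := one_le_pow₀ h1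
  have hgoal : ∀ Q : ℝ, Fsum d Nf a t ^ 2 ≤ Q * R ^ 2 →
      Q ≤ 2 ^ 190 * (1 + |t|) ^ 2 * ((d:ℝ) ^ 2 + d * L ^ 3 + L ^ 5) →
      Fsum d Nf a t ^ 2 ≤ (2 ^ 100 * R * VV d N * (1 + |t|)) ^ 2 := by
    intro Q h2 h3
    refine h2.trans ?_
    calc Q * R ^ 2 ≤ (2 ^ 190 * (1 + |t|) ^ 2 * (3 * VV d N ^ 2)) * R ^ 2 := by
          refine mul_le_mul_of_nonneg_right (h3.trans ?_) (by positivity)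
          exact mul_le_mul_of_nonneg_left hV (by positivity)
      _ = (3 * 2 ^ 190) * ((1 + |t|) ^ 2 * VV d N ^ 2 * R ^ 2) := by ring
      _ ≤ 2 ^ 200 * ((1 + |t|) ^ 2 * VV d N ^ 2 * R ^ 2) :=
          mul_le_mul_of_nonneg_right (by norm_num) (by positivity)
      _ = _ := by ring
  rcases combo (Pf Nf) one_le_Pf L (2 ^ 40) hL1 (by norm_num) hP with ⟨S, hS1, hS2⟩ | ⟨j, S, hj, hjL, hS1, hS2⟩
  · have hcs := cs (univ.filter (fun χ : DirichletCharacter ℂ d => χ.IsPrimitive)) _ _ _ _ (D.secP t S) (D.secP t Sᶜ)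
    simp only [Finset.prod_mul_prod_compl] at hcs
    have hX := prodS_one (Nf := Nf) S
    have hY := prodS_one (Nf := Nf) Sᶜ
    rw [← Finset.prod_mul_prod_compl S] at hP
    set X := ∏ i ∈ S, Pf Nf i
    set Y := ∏ i ∈ Sᶜ, Pf Nf i
    refine hgoal ((d + 2 ^ 40 * X) * (d + 2 ^ 40 * Y)) (hcs.trans (le_of_eq (by ring))) ?_
    calc (d + 2 ^ 40 * X) * (d + 2 ^ 40 * Y) = (d:ℝ) ^ 2 + 2 ^ 40 * (d * X) + 2 ^ 40 * (d * Y) + 2 ^ 80 * (X * Y) := by ring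
      _ ≤ (d:ℝ) ^ 2 + 2 ^ 40 * (d * L ^ 3) + 2 ^ 40 * (d * (2 ^ 40 * L ^ 3)) + 2 ^ 80 * (2 ^ 40 * L ^ 5) := by
        gcongr
      _ ≤ 2 ^ 190 * 1 * ((d:ℝ) ^ 2 + d * L ^ 3 + L ^ 5) := by
        have : 0 ≤ d * L ^ 3 := by positivity
        nlinarith [sq_nonneg (d:ℝ)]
      _ ≤ _ := by gcongr
  · have hN1 : 1 < Nf j := by
      have h := hL1.trans_lt hjL
      rw [Pf, lt_max_iff] at h
      rcases h with h | h
      · exact h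
      · exact absurd h (lt_irrefl _)
    have hPj : Pf Nf j = Nf j := max_eq_left hN1.le
    rw [hPj] at hjL hS1
    have hsm : Smooth (a j) := by
      refine D.hs j (lt_of_le_of_lt ?_ hjL)
      exact Real.rpow_le_rpow_of_exponent_le (by linarith) (by norm_num)
    have hcs := cs (univ.filter (fun χ : DirichletCharacter ℂ d => χ.IsPrimitive)) _ _ _ _
      (D.dual t S j hj hsm hN1.le hS1) (D.secP t (insert j S)ᶜ)
    simp only [Finset.prod_mul_prod_compl] at hcs
    have hY := prodS_one (Nf := Nf) (insert j S)ᶜ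
    set Y := ∏ i ∈ (insert j S)ᶜ, Pf Nf i
    refine hgoal ((2 ^ 60 * (1 + |t|) ^ 2 * d) * (d + 2 ^ 40 * Y)) (hcs.trans (le_of_eq (by ring))) ?_
    calc (2 ^ 60 * (1 + |t|) ^ 2 * d) * (d + 2 ^ 40 * Y)
        ≤ (2 ^ 60 * (1 + |t|) ^ 2 * d) * (d + 2 ^ 40 * (2 ^ 40 * L ^ 3)) := by gcongr
      _ = (1 + |t|) ^ 2 * (2 ^ 60 * (d:ℝ) ^ 2 + 2 ^ 140 * (d * L ^ 3)) := by ring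
      _ ≤ (1 + |t|) ^ 2 * (2 ^ 190 * ((d:ℝ) ^ 2 + d * L ^ 3 + L ^ 5)) := by
        refine mul_le_mul_of_nonneg_left ?_ (by positivity)
        have : 0 ≤ d * L ^ 3 := by positivity
        nlinarith [sq_nonneg (d:ℝ)]
      _ = _ := by ring

lemma Dat.triv [NeZero d] (D : Dat d N Nf a) (t : ℝ) :
    Fsum d Nf a t ≤ 2 ^ 100 * HH d N ^ 1800 * VV d N * (d * N) := by
  classical
  have hd : (2:ℝ) ≤ d := by exact_mod_cast D.hd
  have hN := D.hN
  have h1 := D.HH_one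
  have hV1 := D.VV_one
  have hcs := cs (univ.filter (fun χ : DirichletCharacter ℂ d => χ.IsPrimitive)) _ _ _ _ (D.secP t ∅) (D.secP t univ)
  simp only [prod_empty, one_mul, mul_one] at hcs
  have hcs' : Fsum d Nf a t ^ 2 ≤ _ := hcs
  have hR1 : 1 ≤ HH d N ^ 1800 := one_le_pow₀ h1
  refine le_of_sq_le_sq' (hcs'.trans ?_) (by positivity)
  set R := HH d N ^ 1800 with hR
  have hN2 : N ^ (15 / 8 : ℝ) ≤ N ^ 2 := by
    rw [← Real.rpow_natCast N 2]
    exact Real.rpow_le_rpow_of_exponent_le (by linarith) (by norm_num)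
  have hP := D.prodP
  have hone := prodS_one (Nf := Nf) univ
  have hb : 2 ^ 40 * ∏ j, Pf Nf j ≤ 2 ^ 80 * N ^ 2 := by
    calc _ ≤ 2 ^ 40 * (2 ^ 40 * N ^ 2) := by
          refine mul_le_mul_of_nonneg_left (hP.trans ?_) (by positivity)
          exact mul_le_mul_of_nonneg_left hN2 (by positivity)
      _ = _ := by ring
  calc (d + 2 ^ 40) * R * ((d + 2 ^ 40 * ∏ j, Pf Nf j) * R)
      ≤ (d + 2 ^ 40) * R * ((d + 2 ^ 80 * N ^ 2) * R) := by gcongr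
    _ ≤ (2 ^ 40 * d) * R * ((2 ^ 81 * (d * N ^ 2)) * R) := by
        have e1 : (d:ℝ) + 2 ^ 40 ≤ 2 ^ 40 * d := by norm_num; linarith
        have e2 : (d:ℝ) + 2 ^ 80 * N ^ 2 ≤ 2 ^ 81 * (d * N ^ 2) := by
          have n2 : 1 ≤ N ^ 2 := one_le_pow₀ (by linarith)
          have : (d:ℝ) ≤ d * N ^ 2 := by nlinarith
          have : N ^ 2 ≤ d * N ^ 2 := by nlinarith
          nlinarith
        gcongr
    _ = 2 ^ 121 * (d * N * R) ^ 2 := by ring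
    _ ≤ 2 ^ 200 * (d * N * R) ^ 2 * VV d N ^ 2 := by
        have : 1 ≤ VV d N ^ 2 := one_le_pow₀ hV1
        have h0 : 0 ≤ (d * N * R) ^ 2 := by positivity
        calc _ ≤ 2 ^ 200 * (d * N * R) ^ 2 * 1 := by
              rw [mul_one]; exact mul_le_mul_of_nonneg_right (by norm_num) h0
          _ ≤ _ := by gcongr
    _ = _ := by ring

end DPB


namespace DPB

lemma sumPrimitive_eq (d : ℕ) [NeZero d] (Nf : Fin 40 → ℝ) (a : Fin 40 → ℕ → ℂ) (t : ℝ) :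
    sumPrimitive d (fun χ =>
          ‖∏ j : Fin 40, ∑ n ∈ Finset.Ioc ⌊Nf j⌋₊ ⌊2 * Nf j⌋₊,
              a j n * χ (n : ZMod d) * (n : ℂ) ^ (-(1 / 2 : ℂ) - Complex.I * t)‖) = Fsum d Nf a t := by
  classical
  unfold sumPrimitive Fsum
  rw [← finsum_mem_coe_finset]
  have : {χ : DirichletCharacter ℂ d | χ.IsPrimitive} =
      ((univ.filter (fun χ : DirichletCharacter ℂ d => χ.IsPrimitive) : Finset _) : Set _) := by
    ext; simp
  rw [this]
  rfl

lemma weight_integral (η : ℝ) (hη : 0 < η) :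
    Integrable (fun t : ℝ => (1 + |t|) ^ (-(1 + η))) ∧ ∫ t : ℝ, (1 + |t|) ^ (-(1 + η)) = 2 / η := by
  have hint : Integrable (fun t : ℝ => (1 + |t|) ^ (-(1 + η))) := by
    have := integrable_one_add_norm (E := ℝ) (μ := volume) (r := 1 + η) (by simp [hη])
    simpa [Real.norm_eq_abs] using this
  refine ⟨hint, ?_⟩
  rw [integral_comp_abs (f := fun t : ℝ => (1 + t) ^ (-(1 + η)))]
  have hd : ∀ x ∈ Set.Ici (0:ℝ), HasDerivAt (fun x : ℝ => -(1 / η) * (1 + x) ^ (-η)) ((1 + x) ^ (-(1 + η))) x := by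
    intro x hx
    have hx0 : (0:ℝ) ≤ x := hx
    have h1 : HasDerivAt (fun x : ℝ => 1 + x) 1 x := (hasDerivAt_id x).const_add 1
    have h2 := (h1.rpow_const (p := -η) (Or.inl (by linarith))).const_mul (-(1 / η))
    rw [show -η - 1 = -(1 + η) by ring] at h2
    refine h2.congr_deriv ?_
    field_simp
  have hi : IntegrableOn (fun x : ℝ => (1 + x) ^ (-(1 + η))) (Set.Ioi 0) := by
    refine (hint.integrableOn (s := Set.Ioi 0)).congr_fun ?_ measurableSet_Ioi
    intro x hx
    have hx0 : (0:ℝ) < x := hx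
    simp [abs_of_pos hx0]
  have hlim : Filter.Tendsto (fun x : ℝ => -(1 / η) * (1 + x) ^ (-η)) Filter.atTop (nhds 0) := by
    have h1 := (tendsto_rpow_neg_atTop hη).comp (Filter.tendsto_atTop_add_const_left Filter.atTop 1 Filter.tendsto_id)
    have := h1.const_mul (-(1 / η))
    simpa using this
  rw [integral_Ioi_of_hasDerivAt_of_tendsto' hd hi hlim]
  simp
  ring

lemma min_bound (x D η : ℝ) (hx : 1 ≤ x) (hD : 1 ≤ D) (h0 : 0 ≤ η) (h1 : η ≤ 1) :
    min x D ≤ x ^ (1 - η) * D ^ η := by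
  have hm : 0 < min x D := lt_min (by linarith) (by linarith)
  calc min x D = (min x D) ^ (1 - η) * (min x D) ^ η := by
        rw [← Real.rpow_add hm]; simp
    _ ≤ _ := mul_le_mul (Real.rpow_le_rpow hm.le (min_le_left _ _) (by linarith))
        (Real.rpow_le_rpow hm.le (min_le_right _ _) h0) (by positivity) (by positivity)

lemma integral_bound (F : ℝ → ℝ) (hF0 : ∀ t, 0 ≤ F t) (W D : ℝ) (hW : 0 ≤ W) (hD : 1 < D)
    (hlog : 1 ≤ Real.log D) (h1 : ∀ t, F t ≤ W * (1 + |t|)) (h2 : ∀ t, F t ≤ W * D) :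
    ∫ t : ℝ, F t / (t ^ 2 + 1) ≤ W * (2 * Real.exp 1) * (2 * Real.log D) := by
  set η := 1 / Real.log D with hη
  have hη0 : 0 < η := by positivity
  have hη1 : η ≤ 1 := by rw [hη, div_le_one (by linarith)]; exact hlog
  have hDη : D ^ η = Real.exp 1 := by
    rw [Real.rpow_def_of_pos (by linarith), hη, mul_one_div_cancel (by linarith)]
  obtain ⟨hint, hval⟩ := weight_integral η hη0
  have key : ∀ t : ℝ, F t / (t ^ 2 + 1) ≤ W * (2 * Real.exp 1) * (1 + |t|) ^ (-(1 + η)) := by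
    intro t
    have habs := abs_nonneg t
    have hT : 0 < 1 + |t| := by linarith
    have hF : F t ≤ W * ((1 + |t|) ^ (1 - η) * Real.exp 1) := by
      have := min_bound (1 + |t|) D η (by linarith) hD.le hη0.le hη1
      rw [hDη] at this
      refine le_trans ?_ (mul_le_mul_of_nonneg_left this hW)
      rcases min_choice (1 + |t|) D with h | h <;> rw [h]
      · exact h1 t
      · exact h2 t
    rw [div_le_iff₀ (by positivity)]
    refine hF.trans ?_
    have e : (1 + |t|) ^ (1 - η) = (1 + |t|) ^ (-(1 + η)) * (1 + |t|) ^ 2 := by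
      rw [← Real.rpow_natCast, ← Real.rpow_add hT]; congr 1; push_cast; ring
    have e2 : (1 + |t|) ^ 2 ≤ 2 * (t ^ 2 + 1) := by
      rw [← sq_abs t]; nlinarith [sq_nonneg (1 - |t|)]
    rw [e]
    have hp : 0 ≤ (1 + |t|) ^ (-(1 + η)) := by positivity
    calc _ = (W * Real.exp 1 * (1 + |t|) ^ (-(1 + η))) * (1 + |t|) ^ 2 := by ring
      _ ≤ (W * Real.exp 1 * (1 + |t|) ^ (-(1 + η))) * (2 * (t ^ 2 + 1)) :=
        mul_le_mul_of_nonneg_left e2 (by positivity)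
      _ = _ := by ring
  calc _ ≤ ∫ t : ℝ, W * (2 * Real.exp 1) * (1 + |t|) ^ (-(1 + η)) := by
        refine integral_mono_of_nonneg (Filter.Eventually.of_forall fun t => ?_) (hint.const_mul _)
          (Filter.Eventually.of_forall key)
        exact div_nonneg (hF0 t) (by positivity)
    _ = _ := by
        rw [integral_const_mul, hval, hη]; field_simp

lemma final (d : ℕ) (N : ℝ) (Nf : Fin 40 → ℝ) (a : Fin 40 → ℕ → ℂ) (D : Dat d N Nf a) (C : ℝ)
    (hC : C = 2 ^ 100 * 100 ^ 1800 * (4 * Real.exp 1)) :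
    (∫ t : ℝ, sumPrimitive d (fun χ =>
          ‖∏ j : Fin 40, ∑ n ∈ Finset.Ioc ⌊Nf j⌋₊ ⌊2 * Nf j⌋₊,
              a j n * χ (n : ZMod d) * (n : ℂ) ^ (-(1 / 2 : ℂ) - Complex.I * t)‖) / (t ^ 2 + 1))
        ≤ C * VV d N * Real.log (d * N) ^ 1801 := by
  have hd2 := D.hd
  have hN := D.hN
  have : NeZero d := ⟨by omega⟩
  simp only [sumPrimitive_eq]
  have hd : (2:ℝ) ≤ d := by exact_mod_cast D.hd
  have hH := D.HH_one
  have hV := D.VV_one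
  have h := integral_bound (Fsum d Nf a) (fun t => sum_nonneg fun _ _ => norm_nonneg _)
    (2 ^ 100 * HH d N ^ 1800 * VV d N) (d * N) (by positivity) (by nlinarith) D.log_one D.per_t D.triv
  refine h.trans (le_of_eq ?_)
  rw [hC]
  unfold HH
  rw [mul_pow, pow_succ (Real.log (d * N)) 1800]
  generalize (100:ℝ) ^ 1800 = c1
  generalize (Real.log (d * N)) ^ 1800 = c2
  ring

end DPB

/-- Mean value bound for products of 40 Dirichlet polynomials with total length at most
`N^{15/8-ε}`, with coefficients `1`, `μ(n)` or `log n` (Möbius coefficients only allowed for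
short polynomials): the first moment over primitive characters mod `d` and `t`-average is
`≪ ((N+d)² N^{1/16} / d) (log dN)^{O(1)}`. -/
theorem dirichlet_polynomial_decomposition_bound (ε : ℝ) (hε : 0 < ε) :
    ∃ C > (0 : ℝ), ∃ B > (0 : ℝ), ∀ d : ℕ, 2 ≤ d → ∀ N : ℝ, 2 ≤ N →
      ∀ Nf : Fin 40 → ℝ, (∀ j, 1 / 2 ≤ Nf j) →
      (∏ j, Nf j) ≤ N ^ (15 / 8 - ε : ℝ) →
      ∀ a : Fin 40 → ℕ → ℂ,
      (∀ j, a j = (fun _ => (1 : ℂ)) ∨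
            a j = (fun n => ((ArithmeticFunction.moebius n : ℤ) : ℂ)) ∨
            a j = (fun n : ℕ => (Real.log n : ℂ))) →
      (∀ j, N ^ (1 / 10 : ℝ) < Nf j →
            a j = (fun _ => (1 : ℂ)) ∨ a j = (fun n : ℕ => (Real.log n : ℂ))) →
      (∫ t : ℝ, sumPrimitive d (fun χ =>
          ‖∏ j : Fin 40, ∑ n ∈ Finset.Ioc ⌊Nf j⌋₊ ⌊2 * Nf j⌋₊,
              a j n * χ (n : ZMod d) * (n : ℂ) ^ (-(1 / 2 : ℂ) - Complex.I * t)‖) / (t ^ 2 + 1))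
        ≤ C * ((N + d) ^ 2 * N ^ (1 / 16 : ℝ) / d) * Real.log (d * N) ^ (B : ℝ) := by
  obtain ⟨C, hC⟩ : ∃ C : ℝ, C = 2 ^ 100 * 100 ^ 1800 * (4 * Real.exp 1) := ⟨_, rfl⟩
  refine ⟨C, by rw [hC]; positivity, ((1801 : ℕ) : ℝ), by norm_num, ?_⟩
  intro d hd N hN Nf hNf hprod a ha hs
  have D : DPB.Dat d N Nf a := ⟨hd, hN, hNf, hprod.trans
    (Real.rpow_le_rpow_of_exponent_le (by linarith) (by linarith)), ha, hs⟩
  rw [Real.rpow_natCast]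
  exact DPB.final d N Nf a D C hC
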